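/- arXiv:2005.02945 — 5 statements merged into one kernel-verified Lean document; each statement's English description precedes it below -/
import Mathlib

section
/- Let q, n, d, m be positive integers with q ≥ 2 such that d = m(qd − (q−1)(n−1)) and such that n − d does not divide m(n−1). If r ∈ {1, …, q−1} satisfies n(n−1−d)(r−1)r < (q−r+1)(qm(q+r−2) − 2r), then A_q(n,d) < q²m − r; that is, every code C ⊆ (Fin q)^n with minimum Hamming distance at least d satisfies |C| ≤ q²m − r − 1. -/
/-!
Put `n = card ι` and `q = card α`. The relation between `d` and `m` says that `q * m` is the Plotkin
bound for codes of length `n - 1`, hence it bounds the number of codewords with a prescribed symbol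
in a prescribed coordinate. If such a set falls `t` short of `q * m`, then the distances inside it
exceed `d` by at most `(n - 1 - d) * t * (t - 1)` in total. Since in each coordinate the shortfalls
of a code with `q² * m - r` words add up to `r`, few of its pairs of words are *irregular*, that is,
agree somewhere but have distance greater than `d`.

On the other hand, a set attaining the bound `q * m` has every symbol exactly `m` times in every
other coordinate, so a word outside it agrees with its members in `m * (n - 1)` places altogether.
As `n - d` does not divide this number, one of these pairs is irregular. A coordinate in which some
shortfall is at least `2` has `q - r + 1` symbols with shortfall `0`, and they force more irregular
pairs than the upper bound allows.
-/

open Finset hiding card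
open Fintype (card)

section FinsetSums

theorem sum_mul_sub_one_le {κ R : Type*} [CommRing R] [LinearOrder R] [IsStrictOrderedRing R]
    {s : Finset κ} {f : κ → R} (hf : ∀ i ∈ s, 0 ≤ f i) :
    ∑ i ∈ s, f i * (f i - 1) ≤ (∑ i ∈ s, f i) * (∑ i ∈ s, f i - 1) := by
  simp only [mul_sub_one, sum_sub_distrib, ← sq]
  exact sub_le_sub_right (sum_sq_le_sq_sum_of_nonneg hf) _

theorem card_lt_card_filter_eq_zero_add_sum {κ : Type*} {s : Finset κ} {f : κ → ℤ}
    (hf : ∀ i ∈ s, 0 ≤ f i) (h : ∃ i ∈ s, 2 ≤ f i) :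
    (#s : ℤ) < #{i ∈ s | f i = 0} + ∑ i ∈ s, f i := by
  obtain ⟨i₀, hi₀, h₀⟩ := h
  rw [card_eq_sum_ones, natCast_card_filter, ← sum_add_distrib, Nat.cast_sum]
  refine sum_lt_sum (fun i hi ↦ ?_) ⟨i₀, hi₀, ?_⟩
  · have := hf i hi
    split_ifs <;> grind
  · grind

theorem sum_card_filter_add_two_mul_le {κ : Type*} [DecidableEq κ] {r : κ → κ → Prop}
    [DecidableRel r] [Std.Symm r] {s t : Finset κ} (hts : t ⊆ s) :
    ∑ u ∈ t, #{v ∈ t | r u v} + 2 * ∑ u ∈ s \ t, #{v ∈ t | r u v} ≤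
      ∑ u ∈ s, #{v ∈ s | r u v} := by
  have split (u : κ) : #{v ∈ s | r u v} = #{v ∈ s \ t | r u v} + #{v ∈ t | r u v} := by
    simp only [card_filter, sum_sdiff hts]
  have cross : ∑ u ∈ t, #{v ∈ s \ t | r u v} = ∑ u ∈ s \ t, #{v ∈ t | r u v} := by
    simp only [card_filter]
    rw [sum_comm]
    exact sum_congr rfl fun u _ ↦ sum_congr rfl fun v _ ↦ if_congr (Std.Symm.iff v u) rfl rfl
  rw [← sum_sdiff hts]
  simp only [split, sum_add_distrib, cross]
  lia

end FinsetSums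

section Fibers

variable {ι α : Type*} [DecidableEq α]

/-- The words of `C` with symbol `a` in coordinate `k`. -/
def symbolFiber (C : Finset (ι → α)) (k : ι) (a : α) : Finset (ι → α) := {u ∈ C | u k = a}

theorem mem_symbolFiber {C : Finset (ι → α)} {k : ι} {a : α} {u : ι → α} :
    u ∈ symbolFiber C k a ↔ u ∈ C ∧ u k = a := mem_filter

theorem symbolFiber_subset (C : Finset (ι → α)) (k : ι) (a : α) : symbolFiber C k a ⊆ C :=
  filter_subset _ _

theorem sum_card_symbolFiber [Fintype α] (C : Finset (ι → α)) (k : ι) :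
    ∑ a, #(symbolFiber C k a) = #C := by
  simpa [symbolFiber] using sum_card_fiberwise_eq_card_filter C univ fun u ↦ u k

theorem sum_card_symbolFiber_sq_of_const [Fintype α] {B : Finset (ι → α)} {j : ι} {b : α}
    (hB : ∀ u ∈ B, u j = b) : ∑ a, #(symbolFiber B j a) ^ 2 = #B ^ 2 := by
  rw [sum_eq_single_of_mem b (mem_univ b), symbolFiber, filter_true_of_mem hB]
  intro a _ hab
  rw [symbolFiber, filter_false_of_mem fun u hu h ↦ hab (h.symm.trans (hB u hu))]
  rfl

variable [Fintype ι]

/-- The number of coordinates in which two words agree, complementary to `hammingDist`. -/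
def agreement (u v : ι → α) : ℕ := #{k | u k = v k}

theorem agreement_comm (u v : ι → α) : agreement u v = agreement v u := by
  simp only [agreement, eq_comm]

theorem agreement_self (u : ι → α) : agreement u u = card ι := by
  simp [agreement]

theorem agreement_add_hammingDist (u v : ι → α) : agreement u v + hammingDist u v = card ι :=
  card_filter_add_card_filter_not _

theorem sum_agreement_left (u : ι → α) (B : Finset (ι → α)) :
    ∑ v ∈ B, agreement u v = ∑ k, #(symbolFiber B k (u k)) := by
  simp only [agreement, symbolFiber, card_filter]
  rw [sum_comm]
  simp only [eq_comm]

theorem sum_agreement_mul [Fintype α] {R : Type*} [Semiring R] (C : Finset (ι → α))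
    (f : (ι → α) → (ι → α) → R) :
    ∑ u ∈ C, ∑ v ∈ C, (agreement u v : R) * f u v =
      ∑ k, ∑ a, ∑ u ∈ symbolFiber C k a, ∑ v ∈ symbolFiber C k a, f u v := by
  have fiberwise (k : ι) : ∑ a, ∑ u ∈ symbolFiber C k a, ∑ v ∈ symbolFiber C k a, f u v =
      ∑ u ∈ C, ∑ v ∈ symbolFiber C k (u k), f u v := by
    rw [← Finset.sum_fiberwise C (fun u ↦ u k)]
    refine sum_congr rfl fun a _ ↦ sum_congr rfl fun u hu ↦ ?_
    rw [(mem_filter.1 hu).2]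
  simp only [fiberwise]
  rw [sum_comm (s := univ)]
  refine sum_congr rfl fun u _ ↦ ?_
  simp only [agreement, natCast_card_filter, sum_mul, symbolFiber, sum_filter]
  rw [sum_comm]
  simp only [ite_mul, one_mul, zero_mul, eq_comm]

theorem sum_agreement [Fintype α] (C : Finset (ι → α)) :
    ∑ u ∈ C, ∑ v ∈ C, agreement u v = ∑ k, ∑ a, #(symbolFiber C k a) ^ 2 := by
  simpa [sq] using sum_agreement_mul C fun _ _ ↦ (1 : ℕ)

end Fibers

section Imbalance

variable {ι α : Type*} [DecidableEq α] [Fintype α]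

/-- The amount by which `B` falls short of `card α * m` words (negative if it has more). -/
def deficit (m : ℕ) (B : Finset (ι → α)) : ℤ := card α * m - #B

/-- The quadratic deviation of coordinate `k` of `B` from having each symbol exactly `m` times. -/
def imbalance (m : ℕ) (B : Finset (ι → α)) (k : ι) : ℤ := ∑ a, ((m : ℤ) - #(symbolFiber B k a)) ^ 2

theorem sum_deficit_symbolFiber (m : ℕ) (C : Finset (ι → α)) (k : ι) :
    ∑ a, deficit m (symbolFiber C k a) = card α ^ 2 * m - #C := by
  simp only [deficit, sum_sub_distrib, ← sum_card_symbolFiber C k]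
  simp [sq, mul_assoc]

theorem sum_card_symbolFiber_sq (m : ℕ) (B : Finset (ι → α)) (k : ι) :
    ∑ a, (#(symbolFiber B k a) : ℤ) ^ 2 = imbalance m B k + (2 * m * #B - card α * m ^ 2) := by
  have h : ∑ a, (#(symbolFiber B k a) : ℤ) = #B := mod_cast sum_card_symbolFiber B k
  simp only [imbalance, sub_sq, sum_add_distrib, sum_sub_distrib, ← mul_sum, h, sum_const,
    card_univ, nsmul_eq_mul]
  ring

theorem imbalance_nonneg (m : ℕ) (B : Finset (ι → α)) (k : ι) : 0 ≤ imbalance m B k :=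
  sum_nonneg fun _ _ ↦ sq_nonneg _

theorem card_symbolFiber_of_imbalance_eq_zero {m : ℕ} {B : Finset (ι → α)} {k : ι}
    (h : imbalance m B k = 0) (a : α) : #(symbolFiber B k a) = m := by
  have := (sum_eq_zero_iff_of_nonneg fun _ _ ↦ sq_nonneg _).1 h a (mem_univ a)
  have := sq_eq_zero_iff.1 this
  lia

theorem abs_deficit_le_imbalance (m : ℕ) (B : Finset (ι → α)) (k : ι) :
    |deficit m B| ≤ imbalance m B k := by
  have h : deficit m B = ∑ a, ((m : ℤ) - #(symbolFiber B k a)) := by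
    simp [deficit, ← sum_card_symbolFiber B k]
  rw [h]
  refine (abs_sum_le_sum_abs _ _).trans (sum_le_sum fun a _ ↦ ?_)
  exact (Int.le_self_sq _).trans_eq (sq_abs _)

end Imbalance

section Excess

variable {ι α : Type*} [Fintype ι] [DecidableEq α] {d : ℕ} {C : Finset (ι → α)}

/-- The code `C` has minimum distance at least `d`. -/
def HasMinDist (C : Finset (ι → α)) (d : ℕ) : Prop :=
  ∀ u ∈ C, ∀ v ∈ C, u ≠ v → d ≤ hammingDist u v

theorem HasMinDist.mono (hC : HasMinDist C d) {B : Finset (ι → α)} (hBC : B ⊆ C) :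
    HasMinDist B d :=
  fun u hu v hv ↦ hC u (hBC hu) v (hBC hv)

/-- The amount by which the distance of two distinct words exceeds `d`; it is `0` rather than `-d`
for a word and itself, so that it is nonnegative on a code of minimum distance `d`. -/
def excess (d : ℕ) (u v : ι → α) : ℤ := if u = v then 0 else hammingDist u v - d

theorem excess_eq (d : ℕ) (u v : ι → α) :
    excess d u v = (card ι - d) - agreement u v + if u = v then (d : ℤ) else 0 := by
  have h := agreement_add_hammingDist u v
  rw [excess]
  split_ifs with huv
  · subst huv
    simp [agreement_self]
  · lia

theorem HasMinDist.excess_nonneg (hC : HasMinDist C d) {u v : ι → α} (hu : u ∈ C) (hv : v ∈ C) :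
    0 ≤ excess d u v := by
  rw [excess]
  split_ifs with huv
  · rfl
  · have := hC u hu v hv huv
    lia

theorem HasMinDist.sum_excess_nonneg (hC : HasMinDist C d) :
    0 ≤ ∑ u ∈ C, ∑ v ∈ C, excess d u v :=
  sum_nonneg fun _ hu ↦ sum_nonneg fun _ hv ↦ hC.excess_nonneg hu hv

theorem sum_excess (d : ℕ) (C : Finset (ι → α)) :
    ∑ u ∈ C, ∑ v ∈ C, excess d u v =
      (card ι - d) * #C ^ 2 + d * #C - ∑ u ∈ C, ∑ v ∈ C, (agreement u v : ℤ) := by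
  simp only [excess_eq, sum_add_distrib, sum_sub_distrib, sum_const, sum_ite_eq, sum_ite_mem,
    inter_self, nsmul_eq_mul]
  ring

end Excess

section Plotkin

/-- The relation `m = d / (q * d - (q - 1) * (n - 1))`, cleared of denominators. It makes `q * m`
the Plotkin bound for codes of length `n - 1` and minimum distance `d` over `q` symbols. -/
def IsPlotkinRatio (q n d m : ℕ) : Prop :=
  (d : ℤ) = m * (q * d - ((q : ℤ) - 1) * ((n : ℤ) - 1))

theorem IsPlotkinRatio.lt {q n d m : ℕ} (h : IsPlotkinRatio q n d m) (hq : 2 ≤ q) (hm : 0 < m) :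
    d < n := by
  unfold IsPlotkinRatio at h
  by_contra! hnd
  have hfactor : (d : ℤ) + 1 ≤ q * d - ((q : ℤ) - 1) * ((n : ℤ) - 1) := by
    zify at hq hnd
    nlinarith
  zify at hm
  nlinarith

variable {ι α : Type*} [Fintype ι] [DecidableEq α] [Fintype α] {d m : ℕ} {B : Finset (ι → α)}
  {j : ι} {b : α}

theorem sum_excess_of_const [DecidableEq ι] (h : IsPlotkinRatio (card α) (card ι) d m)
    (hB : ∀ u ∈ B, u j = b) :
    ∑ u ∈ B, ∑ v ∈ B, excess d u v =
      (card ι - 1 - d) * deficit m B ^ 2 + d * deficit m B -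
        ∑ k ∈ univ.erase j, imbalance m B k := by
  have hagree : ∑ u ∈ B, ∑ v ∈ B, (agreement u v : ℤ) = #B ^ 2 +
      (∑ k ∈ univ.erase j, imbalance m B k +
        (card ι - 1) * (2 * m * #B - card α * m ^ 2)) := calc
    _ = ∑ k, ∑ a, (#(symbolFiber B k a) : ℤ) ^ 2 := mod_cast sum_agreement B
    _ = #B ^ 2 + ∑ k ∈ univ.erase j, ∑ a, (#(symbolFiber B k a) : ℤ) ^ 2 := by
      rw [← add_sum_erase _ _ (mem_univ j)]
      exact congrArg (· + _) (mod_cast sum_card_symbolFiber_sq_of_const hB)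
    _ = _ := by
      simp only [sum_card_symbolFiber_sq m, sum_add_distrib, sum_const, nsmul_eq_mul]
      rw [cast_card_erase_of_mem (mem_univ j), card_univ]
  have hcard : (#B : ℤ) = card α * m - deficit m B := (sub_sub_cancel _ _).symm
  unfold IsPlotkinRatio at h
  rw [sum_excess, hagree, hcard]
  linear_combination (card α * m - 2 * deficit m B) * h

theorem sum_excess_le_of_const (h : IsPlotkinRatio (card α) (card ι) d m)
    (hB : ∀ u ∈ B, u j = b) :
    ∑ u ∈ B, ∑ v ∈ B, excess d u v ≤
      (card ι - 1 - d) * deficit m B ^ 2 + d * deficit m B - (card ι - 1) * |deficit m B| := by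
  classical
  have himbalance := card_nsmul_le_sum (univ.erase j) (imbalance m B) _
    fun k _ ↦ abs_deficit_le_imbalance m B k
  rw [nsmul_eq_mul, cast_card_erase_of_mem (mem_univ j), card_univ] at himbalance
  rw [sum_excess_of_const h hB]
  exact sub_le_sub_left himbalance _

theorem HasMinDist.deficit_nonneg_of_const (hC : HasMinDist B d) (hd : 0 < d)
    (h : IsPlotkinRatio (card α) (card ι) d m) (hB : ∀ u ∈ B, u j = b) : 0 ≤ deficit m B := by
  by_contra! hneg
  obtain ⟨B', hB', hcard⟩ : ∃ B' ⊆ B, #B' = card α * m + 1 :=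
    exists_subset_card_eq (by unfold deficit at hneg; lia)
  have hdeficit : deficit m B' = -1 := by simp [deficit, hcard]
  have hupper := sum_excess_le_of_const h fun u hu ↦ hB u (hB' hu)
  have hlower := (hC.mono hB').sum_excess_nonneg
  rw [hdeficit, abs_neg, abs_one] at hupper
  lia

theorem HasMinDist.card_symbolFiber_of_deficit_eq_zero (hC : HasMinDist B d)
    (h : IsPlotkinRatio (card α) (card ι) d m) (hB : ∀ u ∈ B, u j = b) (h₀ : deficit m B = 0)
    {k : ι} (hk : k ≠ j) (a : α) : #(symbolFiber B k a) = m := by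
  classical
  have hexcess := hC.sum_excess_nonneg
  rw [sum_excess_of_const h hB, h₀] at hexcess
  have hsum : ∑ k ∈ univ.erase j, imbalance m B k = 0 :=
    le_antisymm (by lia) (sum_nonneg fun k _ ↦ imbalance_nonneg m B k)
  exact card_symbolFiber_of_imbalance_eq_zero
    ((sum_eq_zero_iff_of_nonneg fun k _ ↦ imbalance_nonneg m B k).1 hsum k (by simp [hk])) a

theorem HasMinDist.sum_agreement_of_deficit_eq_zero (hC : HasMinDist B d)
    (h : IsPlotkinRatio (card α) (card ι) d m) (hB : ∀ u ∈ B, u j = b) (h₀ : deficit m B = 0)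
    {u : ι → α} (hu : u j ≠ b) :
    ∑ v ∈ B, (agreement u v : ℤ) = m * (card ι - 1) := by
  classical
  have hj : symbolFiber B j (u j) = ∅ :=
    filter_false_of_mem fun v hv hvu ↦ hu (hvu.symm.trans (hB v hv))
  have hrest : ∀ k ∈ univ.erase j, #(symbolFiber B k (u k)) = m := fun k hk ↦
    hC.card_symbolFiber_of_deficit_eq_zero h hB h₀ (ne_of_mem_erase hk) _
  rw [← Nat.cast_sum, sum_agreement_left, ← add_sum_erase _ _ (mem_univ j), hj,
    sum_congr rfl hrest, sum_const, smul_eq_mul, card_empty, zero_add, Nat.cast_mul,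
    cast_card_erase_of_mem (mem_univ j), card_univ, mul_comm]

end Plotkin

section Irregular

variable {ι α : Type*} [Fintype ι] [DecidableEq α] {d m : ℕ} {C : Finset (ι → α)}

/-- Two words form an irregular pair if their distance is neither the least distance `d` nor the
greatest distance `card ι` that distinct codewords can have. -/
def Irregular (d : ℕ) (u v : ι → α) : Prop := d < hammingDist u v ∧ 0 < agreement u v

instance (d : ℕ) : DecidableRel (Irregular d : (ι → α) → (ι → α) → Prop) :=
  fun _ _ ↦ instDecidableAnd

instance (d : ℕ) : Std.Symm (Irregular d : (ι → α) → (ι → α) → Prop) where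
  symm u v := by simp only [Irregular, hammingDist_comm u, agreement_comm u, imp_self]

theorem dvd_agreement_of_not_irregular {u v : ι → α} (huv : d ≤ hammingDist u v)
    (h : ¬ Irregular d u v) : (card ι - d : ℤ) ∣ agreement u v := by
  have hcard := agreement_add_hammingDist u v
  obtain hdist | hagree : hammingDist u v = d ∨ agreement u v = 0 := by
    unfold Irregular at h
    lia
  · rw [show (card ι - d : ℤ) = agreement u v by lia]
  · simp [hagree]

theorem HasMinDist.exists_irregular [Fintype α] (hC : HasMinDist C d)
    (h : IsPlotkinRatio (card α) (card ι) d m)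
    (hndvd : ¬ ((card ι : ℤ) - d ∣ m * ((card ι : ℤ) - 1))) {j : ι} {b : α}
    (h₀ : deficit m (symbolFiber C j b) = 0) {u : ι → α} (hu : u ∈ C) (hub : u j ≠ b) :
    ∃ v ∈ symbolFiber C j b, Irregular d u v := by
  by_contra! hregular
  have hconst : ∀ v ∈ symbolFiber C j b, v j = b := fun v hv ↦ (mem_symbolFiber.1 hv).2
  rw [← (hC.mono (symbolFiber_subset C j b)).sum_agreement_of_deficit_eq_zero h hconst h₀ hub]
    at hndvd
  refine hndvd (dvd_sum fun v hv ↦ dvd_agreement_of_not_irregular ?_ (hregular v hv))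
  exact hC u hu v (symbolFiber_subset C j b hv) fun huv ↦ hub (huv ▸ hconst v hv)

/-- The number of words of `S` that form an irregular pair with `u`. -/
def irregularDegree (d : ℕ) (S : Finset (ι → α)) (u : ι → α) : ℕ := #{v ∈ S | Irregular d u v}

theorem HasMinDist.irregularDegree_le (hC : HasMinDist C d) {u : ι → α} (hu : u ∈ C) :
    (irregularDegree d C u : ℤ) ≤ ∑ v ∈ C, agreement u v * excess d u v := by
  rw [irregularDegree, natCast_card_filter]
  refine sum_le_sum fun v hv ↦ ?_
  have hexcess := hC.excess_nonneg hu hv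
  split_ifs with huv
  · have hne : u ≠ v := by
      rintro rfl
      simp [Irregular] at huv
    have hpos : 0 < excess d u v := by
      rw [excess, if_neg hne]
      exact sub_pos.2 (mod_cast huv.1)
    exact Int.add_one_le_of_lt (mul_pos (mod_cast huv.2) hpos)
  · positivity

variable [Fintype α]

theorem HasMinDist.deficit_symbolFiber_nonneg (hC : HasMinDist C d) (hd : 0 < d)
    (h : IsPlotkinRatio (card α) (card ι) d m) (k : ι) (a : α) :
    0 ≤ deficit m (symbolFiber C k a) :=
  (hC.mono (symbolFiber_subset C k a)).deficit_nonneg_of_const hd h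
    fun _ hu ↦ (mem_symbolFiber.1 hu).2

theorem HasMinDist.sum_irregularDegree_le (hC : HasMinDist C d) (hd : 0 < d)
    (h : IsPlotkinRatio (card α) (card ι) d m) :
    ∑ u ∈ C, (irregularDegree d C u : ℤ) ≤ (card ι - 1 - d) *
      ∑ k, ∑ a, deficit m (symbolFiber C k a) * (deficit m (symbolFiber C k a) - 1) := calc
  _ ≤ ∑ u ∈ C, ∑ v ∈ C, agreement u v * excess d u v :=
    sum_le_sum fun _ hu ↦ hC.irregularDegree_le hu
  _ = ∑ k, ∑ a, ∑ u ∈ symbolFiber C k a, ∑ v ∈ symbolFiber C k a, excess d u v :=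
    sum_agreement_mul C _
  _ ≤ _ := by
    simp only [mul_sum]
    refine sum_le_sum fun k _ ↦ sum_le_sum fun a _ ↦ ?_
    have hconst : ∀ u ∈ symbolFiber C k a, u k = a := fun u hu ↦ (mem_symbolFiber.1 hu).2
    have hexcess := sum_excess_le_of_const h hconst
    rw [abs_of_nonneg (hC.deficit_symbolFiber_nonneg hd h k a)] at hexcess
    linarith

theorem HasMinDist.card_erase_le_irregularDegree (hC : HasMinDist C d)
    (h : IsPlotkinRatio (card α) (card ι) d m)
    (hndvd : ¬ ((card ι : ℤ) - d ∣ m * ((card ι : ℤ) - 1))) {j : ι} {F : Finset α}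
    (hF : ∀ a ∈ F, deficit m (symbolFiber C j a) = 0) {u : ι → α} (hu : u ∈ C) :
    #(F.erase (u j)) ≤ irregularDegree d {v ∈ C | v j ∈ F} u := by
  refine card_le_card_of_surjOn (fun v ↦ v j) fun a ha ↦ ?_
  obtain ⟨hau, haF⟩ := mem_erase.1 (mem_coe.1 ha)
  obtain ⟨v, hv, huv⟩ := hC.exists_irregular h hndvd (hF a haF) hu hau.symm
  obtain ⟨hvC, rfl⟩ := mem_symbolFiber.1 hv
  exact ⟨v, by simp [hvC, haF, huv], rfl⟩

/-- Let `P` be the union of the fibers over `F`. There are at least `#P * (#F - 1)` irregular pairs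
inside `P`, and at least `2 * #(C \ P) * #F` with exactly one member in `P`. -/
theorem HasMinDist.le_sum_irregularDegree (hC : HasMinDist C d)
    (h : IsPlotkinRatio (card α) (card ι) d m)
    (hndvd : ¬ ((card ι : ℤ) - d ∣ m * ((card ι : ℤ) - 1))) {j : ι} {F : Finset α}
    (hF : ∀ a ∈ F, deficit m (symbolFiber C j a) = 0) :
    (#F : ℤ) * (2 * #C - card α * m * (#F + 1)) ≤ ∑ u ∈ C, (irregularDegree d C u : ℤ) := by
  classical
  set P := {v ∈ C | v j ∈ F} with hP
  have hPC : P ⊆ C := filter_subset _ _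
  have hcardP : (#P : ℤ) = #F * (card α * m) := by
    rw [hP, ← sum_card_fiberwise_eq_card_filter, Nat.cast_sum, ← nsmul_eq_mul]
    exact sum_eq_card_nsmul fun a ha ↦ (sub_eq_zero.1 (hF a ha)).symm
  have hcardPc : (#(C \ P) : ℤ) = #C - #P := cast_card_sdiff hPC
  have hinside : #P * (#F - 1 : ℤ) ≤ ∑ u ∈ P, (irregularDegree d P u : ℤ) := by
    rw [← nsmul_eq_mul]
    refine card_nsmul_le_sum _ _ _ fun u hu ↦ ?_
    rw [← cast_card_erase_of_mem (mem_filter.1 hu).2]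
    exact mod_cast hC.card_erase_le_irregularDegree h hndvd hF (hPC hu)
  have houtside : #(C \ P) * (#F : ℤ) ≤ ∑ u ∈ C \ P, (irregularDegree d P u : ℤ) := by
    rw [← nsmul_eq_mul]
    refine card_nsmul_le_sum _ _ _ fun u hu ↦ ?_
    obtain ⟨huC, huP⟩ := mem_sdiff.1 hu
    have huF : u j ∉ F := fun huF ↦ huP (mem_filter.2 ⟨huC, huF⟩)
    simpa [erase_eq_of_notMem huF] using hC.card_erase_le_irregularDegree h hndvd hF huC
  have hpairs : ∑ u ∈ P, (irregularDegree d P u : ℤ) +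
      2 * ∑ u ∈ C \ P, (irregularDegree d P u : ℤ) ≤ ∑ u ∈ C, (irregularDegree d C u : ℤ) :=
    mod_cast sum_card_filter_add_two_mul_le hPC
  rw [hcardPc, hcardP] at houtside
  rw [hcardP] at hinside
  linarith

theorem HasMinDist.sum_irregularDegree_pos [Nonempty ι] (hC : HasMinDist C d) (hd : 0 < d)
    (h : IsPlotkinRatio (card α) (card ι) d m)
    (hndvd : ¬ ((card ι : ℤ) - d ∣ m * ((card ι : ℤ) - 1)))
    (hlarge : card α * m < #C) (hsmall : card α ^ 2 * m < #C + card α) :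
    0 < ∑ u ∈ C, (irregularDegree d C u : ℤ) := by
  obtain ⟨k⟩ := ‹Nonempty ι›
  obtain ⟨a, -, ha⟩ : ∃ a ∈ univ, deficit m (symbolFiber C k a) < 1 := by
    apply exists_lt_of_sum_lt
    rw [sum_deficit_symbolFiber, sum_const, nsmul_one, card_univ]
    lia
  have h₀ : deficit m (symbolFiber C k a) = 0 :=
    le_antisymm (Int.lt_add_one_iff.1 ha) (hC.deficit_symbolFiber_nonneg hd h k a)
  obtain ⟨u, huC, hua⟩ : ∃ u ∈ C, u k ≠ a := by
    by_contra! hall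
    rw [symbolFiber, filter_true_of_mem hall, deficit] at h₀
    lia
  obtain ⟨v, hv, huv⟩ := hC.exists_irregular h hndvd h₀ huC hua
  have hdegree : 0 < irregularDegree d C u :=
    card_pos.2 ⟨v, mem_filter.2 ⟨symbolFiber_subset C k a hv, huv⟩⟩
  exact sum_pos' (fun _ _ ↦ Nat.cast_nonneg _) ⟨u, huC, mod_cast hdegree⟩

theorem HasMinDist.exists_two_le_deficit [Nonempty ι] (hC : HasMinDist C d) (hd : 0 < d)
    (h : IsPlotkinRatio (card α) (card ι) d m)
    (hndvd : ¬ ((card ι : ℤ) - d ∣ m * ((card ι : ℤ) - 1)))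
    (hlarge : card α * m < #C) (hsmall : card α ^ 2 * m < #C + card α) :
    ∃ k a, 2 ≤ deficit m (symbolFiber C k a) := by
  by_contra! hlt
  have hzero (k : ι) (a : α) :
      deficit m (symbolFiber C k a) * (deficit m (symbolFiber C k a) - 1) = 0 := by
    have := hC.deficit_symbolFiber_nonneg hd h k a
    have := hlt k a
    rw [mul_eq_zero]
    lia
  have hpos := hC.sum_irregularDegree_pos hd h hndvd hlarge hsmall
  have hupper := hC.sum_irregularDegree_le hd h
  simp only [hzero, sum_const_zero, mul_zero] at hupper
  lia

theorem HasMinDist.card_ne_sq_mul_sub [Nonempty ι] (hC : HasMinDist C d) (hd : 0 < d) (hm : 0 < m)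
    (h : IsPlotkinRatio (card α) (card ι) d m)
    (hndvd : ¬ ((card ι : ℤ) - d ∣ m * ((card ι : ℤ) - 1))) (hα : 2 ≤ card α) {r : ℕ}
    (hr : r < card α)
    (hineq : (card ι : ℤ) * (card ι - 1 - d) * (r - 1) * r <
      (card α - r + 1) * (card α * m * (card α + r - 2) - 2 * r)) :
    (#C : ℤ) ≠ card α ^ 2 * m - r := by
  intro hcard
  have hsum (k : ι) : ∑ a, deficit m (symbolFiber C k a) = r := by
    rw [sum_deficit_symbolFiber, hcard, sub_sub_cancel]
  have hnonneg (k : ι) (a : α) (_ : a ∈ univ) := hC.deficit_symbolFiber_nonneg hd h k a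
  have hlarge : card α * m < #C := by
    zify at hα hm hr ⊢
    nlinarith
  obtain ⟨j, a, ha⟩ := hC.exists_two_le_deficit hd h hndvd hlarge (by lia)
  have hfull := card_lt_card_filter_eq_zero_add_sum (hnonneg j) ⟨a, mem_univ a, ha⟩
  rw [hsum, card_univ] at hfull
  obtain ⟨F, hF, hcardF⟩ : ∃ F ⊆ univ.filter fun a ↦ deficit m (symbolFiber C j a) = 0,
      #F = card α - r + 1 :=
    exists_subset_card_eq (by lia)
  have hlower := hC.le_sum_irregularDegree h hndvd fun a ha ↦ (mem_filter.1 (hF ha)).2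
  have hupper : ∑ u ∈ C, (irregularDegree d C u : ℤ) ≤
      (card ι - 1 - d) * (card ι * (r * (r - 1))) := by
    refine (hC.sum_irregularDegree_le hd h).trans (mul_le_mul_of_nonneg_left ?_ ?_)
    · rw [← card_univ, ← nsmul_eq_mul]
      refine sum_le_card_nsmul _ _ _ fun k _ ↦ ?_
      simpa only [hsum] using sum_mul_sub_one_le (hnonneg k)
    · have := h.lt hα hm
      lia
  rw [show (#F : ℤ) = card α - r + 1 by lia, hcard] at hlower
  linarith

end Irregular

theorem divisibility_bound_general {ι α : Type*} [Fintype ι] [Nonempty ι] [Fintype α]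
    [DecidableEq α] {d m r : ℕ} (hα : 2 ≤ card α) (hd : 0 < d) (hm : 0 < m)
    (h : IsPlotkinRatio (card α) (card ι) d m)
    (hndvd : ¬ ((card ι : ℤ) - d ∣ m * ((card ι : ℤ) - 1))) (hr : r < card α)
    (hineq : (card ι : ℤ) * (card ι - 1 - d) * (r - 1) * r <
      (card α - r + 1) * (card α * m * (card α + r - 2) - 2 * r))
    {C : Finset (ι → α)} (hC : HasMinDist C d) :
    (#C : ℤ) ≤ card α ^ 2 * m - r - 1 := by
  by_contra! hlt
  have hle : r ≤ card α ^ 2 * m := by nlinarith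
  obtain ⟨B, hBC, hB⟩ : ∃ B ⊆ C, #B = card α ^ 2 * m - r :=
    exists_subset_card_eq (by zify [hle]; lia)
  exact (hC.mono hBC).card_ne_sq_mul_sub hd hm h hndvd hα hr hineq (by simp [hB, hle])

/-- A strengthening of the Plotkin bound (Theorem from Chapter 4 of the thesis):
if `d = m(qd - (q-1)(n-1))`, `n - d` does not divide `m(n-1)`, and
`r ∈ {1,…,q-1}` satisfies `n(n-1-d)(r-1)r < (q-r+1)(qm(q+r-2)-2r)`,
then `A_q(n,d) < q²m - r`, i.e. every code `C ⊆ (Fin q)^n` with minimum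
Hamming distance at least `d` satisfies `|C| ≤ q²m - r - 1`. -/
theorem divisibility_bound (q n d m r : ℕ)
    (hq : 2 ≤ q) (hn : 0 < n) (hd : 0 < d) (hm : 0 < m)
    (heq : (d : ℤ) = (m : ℤ) * ((q : ℤ) * d - ((q : ℤ) - 1) * ((n : ℤ) - 1)))
    (hndvd : ¬ ((n : ℤ) - (d : ℤ) ∣ (m : ℤ) * ((n : ℤ) - 1)))
    (hr1 : 1 ≤ r) (hr2 : r ≤ q - 1)
    (hineq : (n : ℤ) * ((n : ℤ) - 1 - (d : ℤ)) * ((r : ℤ) - 1) * (r : ℤ)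
      < ((q : ℤ) - (r : ℤ) + 1) * ((q : ℤ) * (m : ℤ) * ((q : ℤ) + (r : ℤ) - 2) - 2 * (r : ℤ)))
    (C : Finset (Fin n → Fin q))
    (hC : ∀ u ∈ C, ∀ v ∈ C, u ≠ v → d ≤ hammingDist u v) :
    (C.card : ℤ) ≤ (q : ℤ) ^ 2 * (m : ℤ) - (r : ℤ) - 1 := by
  have : Nonempty (Fin n) := ⟨⟨0, hn⟩⟩
  simpa using divisibility_bound_general (ι := Fin n) (α := Fin q) (r := r) (by simpa) hd hm
    (by simpa [IsPlotkinRatio]) (by simpa) (by simp; lia) (by simpa) hC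
end

section
/- If q is a positive integer with q ≡ 1 (mod 4) and q ≠ 1, then A_q(q+3, q+1) ≤ q²(q+1)/2 − q = (q−1)q(q+2)/2; that is, every code C ⊆ (Fin q)^{q+3} with minimum Hamming distance at least q+1 has cardinality at most (q−1)q(q+2)/2. -/
/-!
Two distinct codewords agree in at most two coordinates. Write `q = 2 * m - 1`; fix a coordinate
`j` and a letter `a`, let `B` be the block of codewords with letter `a` at `j`, and let
`d = q * m - #B` be its deficiency. Counting the agreements inside `B` coordinate by coordinate
shows that the sizes of the blocks of `B` away from `j` have squared deviation from `m` at most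
`d * (d + q + 1)` in total, even after adding the number `Z` of ordered pairs in `B` that agree
only at `j`. By Cauchy–Schwarz, `0 ≤ d`; since `e ≤ e ^ 2` for integers, `Z ≤ d * (d - 1)`; and if
`d = 0`, then all the blocks of `B` away from `j` have exactly `m` elements.

The total deficiency `T = q * (q * m) - #C` at a coordinate does not depend on the coordinate.
Suppose `T < q`. Then some block `B` has deficiency `0`. A codeword outside `B` has `(q + 2) * m`
agreements with the words of `B`, which is odd when `q ≡ 1 (mod 4)`, so it agrees exactly once with
some word of `B`. This yields `2 * (#C - q * m)` ordered pairs agreeing exactly once, more than the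
`(q + 3) * T * (T - 1)` that the bounds on `Z` leave room for.
-/

open Finset

namespace HammingCode

theorem two_mul_card_sdiff_le_card_interedges {β : Type*} [DecidableEq β] {r : β → β → Prop}
    [DecidableRel r] [Std.Symm r] {s t : Finset β} (hts : t ⊆ s)
    (h : ∀ x ∈ s \ t, ∃ y ∈ t, r x y) : 2 * #(s \ t) ≤ #(Rel.interedges r s s) := by
  have hcross : #(s \ t) ≤ #(Rel.interedges r (s \ t) t) := by
    refine card_le_card_of_surjOn Prod.fst fun x hx ↦ ?_
    obtain ⟨y, hy, hxy⟩ := h x hx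
    exact ⟨(x, y), Rel.mk_mem_interedges_iff.2 ⟨hx, hy, hxy⟩, rfl⟩
  have hdisj : Disjoint (Rel.interedges r (s \ t) t) (Rel.interedges r t (s \ t)) :=
    (Rel.interedges_disjoint_left r sdiff_disjoint s).mono
      (Rel.interedges_mono subset_rfl hts) (Rel.interedges_mono subset_rfl sdiff_subset)
  calc
    2 * #(s \ t) ≤ #(Rel.interedges r (s \ t) t) + #(Rel.interedges r t (s \ t)) := by
      rw [Rel.card_interedges_comm t]
      lia
    _ = #(Rel.interedges r (s \ t) t ∪ Rel.interedges r t (s \ t)) :=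
      (card_union_of_disjoint hdisj).symm
    _ ≤ #(Rel.interedges r s s) :=
      card_le_card (union_subset (Rel.interedges_mono sdiff_subset hts)
        (Rel.interedges_mono hts sdiff_subset))

theorem card_univ_erase {ι : Type*} [Fintype ι] [DecidableEq ι] {n : ℕ}
    (hι : Fintype.card ι = n + 1) (j : ι) : #(univ.erase j) = n := by
  rw [card_erase_of_mem (mem_univ j), card_univ, hι, Nat.add_sub_cancel]

section Block

variable {ι α : Type*} [DecidableEq α]

/-- The block of a code at a coordinate `i` and a letter `a`: its words with letter `a` at `i`. The
coordinate is not deleted, so a block is again a code of the same length. -/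
def block (C : Finset (ι → α)) (i : ι) (a : α) : Finset (ι → α) := {u ∈ C | u i = a}

theorem mem_block {C : Finset (ι → α)} {i : ι} {a : α} {u : ι → α} :
    u ∈ block C i a ↔ u ∈ C ∧ u i = a :=
  mem_filter

theorem block_subset (C : Finset (ι → α)) (i : ι) (a : α) : block C i a ⊆ C :=
  filter_subset _ _

theorem block_block_self (C : Finset (ι → α)) (i : ι) (a : α) :
    block (block C i a) i a = block C i a := by
  simp [block, filter_filter]

theorem block_block_of_ne {a b : α} (hab : a ≠ b) (C : Finset (ι → α)) (i : ι) :
    block (block C i a) i b = ∅ :=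
  filter_eq_empty_iff.2 fun _ hu hub ↦ hab ((mem_block.1 hu).2.symm.trans hub)

variable [Fintype α]

theorem sum_card_block (C : Finset (ι → α)) (i : ι) : ∑ a, #(block C i a) = #C :=
  (card_eq_sum_card_fiberwise fun _ _ ↦ mem_coe.2 (mem_univ _)).symm

theorem sum_sub_card_block (C : Finset (ι → α)) (i : ι) (x : ℤ) :
    ∑ a, (x - #(block C i a)) = Fintype.card α * x - #C := by
  rw [sum_sub_distrib, ← sum_card_block C i]
  simp

theorem sum_sub_card_block_sq (C : Finset (ι → α)) (i : ι) (x : ℤ) :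
    ∑ a, (x - #(block C i a)) ^ 2 =
      ∑ a, (#(block C i a) : ℤ) ^ 2 - 2 * x * #C + Fintype.card α * x ^ 2 := by
  simp only [sub_sq, sum_add_distrib, sum_sub_distrib, ← mul_sum, ← Nat.cast_sum, sum_card_block,
    sum_const, card_univ, nsmul_eq_mul]
  ring

theorem sum_card_block_block_sq (C : Finset (ι → α)) (i : ι) (a : α) :
    ∑ b, #(block (block C i a) i b) ^ 2 = #(block C i a) ^ 2 := by
  rw [sum_eq_single a (fun b _ hb ↦ by simp [block_block_of_ne hb.symm]) (by simp),
    block_block_self]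

end Block

section Agreement

variable {ι α : Type*} [Fintype ι] [DecidableEq α]

/-- The number of coordinates in which two words agree, that is, the length of the words minus
their Hamming distance. -/
def agreement (u v : ι → α) : ℕ := #{i | u i = v i}

/-- The ordered pairs of words of a code that agree in exactly one coordinate. -/
def oncePairs (C : Finset (ι → α)) : Finset ((ι → α) × (ι → α)) :=
  Rel.interedges (fun u v ↦ agreement u v = 1) C C

theorem agreement_comm (u v : ι → α) : agreement u v = agreement v u := by
  simp only [agreement, eq_comm]

theorem agreement_self (u : ι → α) : agreement u u = Fintype.card ι := by
  simp [agreement]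

theorem agreement_add_hammingDist (u v : ι → α) :
    agreement u v + hammingDist u v = Fintype.card ι :=
  card_filter_add_card_filter_not _

theorem sum_agreement_eq_sum_card_block (D : Finset (ι → α)) (u : ι → α) :
    ∑ v ∈ D, agreement u v = ∑ i, #(block D i (u i)) := by
  simp only [agreement_comm u]
  exact sum_card_bipartiteAbove_eq_sum_card_bipartiteBelow fun (v : ι → α) i ↦ v i = u i

theorem exists_agreement_eq_one_of_odd_sum {D : Finset (ι → α)} {u : ι → α}
    (hD : ∀ v ∈ D, agreement u v ≤ 2) (hodd : Odd (∑ v ∈ D, agreement u v)) :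
    ∃ v ∈ D, agreement u v = 1 := by
  by_contra! hne
  refine Nat.not_even_iff_odd.2 hodd (even_sum _ fun v hv ↦ ?_)
  have hle := hD v hv
  have hne := hne v hv
  interval_cases agreement u v <;> simp_all

variable [Fintype α]

theorem sum_agreement_eq_sum_card_filter (P : Finset ((ι → α) × (ι → α))) :
    ∑ p ∈ P, agreement p.1 p.2 = ∑ i, ∑ a, #{p ∈ P | p.1 i = a ∧ p.2 i = a} := by
  calc
    ∑ p ∈ P, agreement p.1 p.2 = ∑ i, #{p ∈ P | p.1 i = p.2 i} :=
      sum_card_bipartiteAbove_eq_sum_card_bipartiteBelow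
        fun (p : (ι → α) × (ι → α)) i ↦ p.1 i = p.2 i
    _ = ∑ i, ∑ a, #{p ∈ P | p.1 i = a ∧ p.2 i = a} := sum_congr rfl fun i _ ↦ by
      rw [card_eq_sum_card_fiberwise (f := fun p ↦ p.1 i) (t := univ) fun _ _ ↦ by simp]
      refine sum_congr rfl fun a _ ↦ ?_
      rw [filter_filter]
      exact congrArg card (filter_congr fun p _ ↦ by grind)

theorem sum_product_agreement (D : Finset (ι → α)) :
    ∑ p ∈ D ×ˢ D, agreement p.1 p.2 = ∑ i, ∑ a, #(block D i a) ^ 2 := by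
  rw [sum_agreement_eq_sum_card_filter]
  refine sum_congr rfl fun i _ ↦ sum_congr rfl fun a _ ↦ ?_
  rw [sq, ← card_product, block, ← filter_product]

theorem card_oncePairs (C : Finset (ι → α)) :
    #(oncePairs C) = ∑ i, ∑ a, #(oncePairs (block C i a)) := by
  have hfilter (i : ι) (a : α) :
      {p ∈ oncePairs C | p.1 i = a ∧ p.2 i = a} = oncePairs (block C i a) := by
    ext p
    simp only [oncePairs, mem_filter, Rel.mem_interedges_iff, mem_block]
    tauto
  calc
    #(oncePairs C) = ∑ p ∈ oncePairs C, agreement p.1 p.2 := by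
      rw [card_eq_sum_ones]
      exact sum_congr rfl fun p hp ↦ (Rel.mem_interedges_iff.1 hp).2.2.symm
    _ = ∑ i, ∑ a, #(oncePairs (block C i a)) := by
      simp only [sum_agreement_eq_sum_card_filter, hfilter]

theorem sum_card_block_sq_add_card_oncePairs_le {D : Finset (ι → α)} (hι : Fintype.card ι ≠ 1)
    (hD : (D : Set (ι → α)).Pairwise fun u v ↦ agreement u v ≤ 2) :
    ∑ i, ∑ a, #(block D i a) ^ 2 + #(oncePairs D) + 2 * #D ≤
      2 * #D ^ 2 + Fintype.card ι * #D := by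
  have hpair (p) (hp : p ∈ D.offDiag) :
      agreement p.1 p.2 + (if agreement p.1 p.2 = 1 then 1 else 0) ≤ 2 := by
    obtain ⟨hu, hv, hne⟩ := mem_offDiag.1 hp
    have := hD hu hv hne
    split_ifs <;> lia
  have hoff := sum_le_card_nsmul _ _ 2 hpair
  rw [offDiag_card, smul_eq_mul] at hoff
  have hsum : ∑ i, ∑ a, #(block D i a) ^ 2 + #(oncePairs D) = Fintype.card ι * #D +
      ∑ p ∈ D.offDiag, (agreement p.1 p.2 + if agreement p.1 p.2 = 1 then 1 else 0) := by
    rw [← sum_product_agreement, oncePairs, Rel.interedges, card_filter, ← sum_add_distrib,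
      ← diag_union_offDiag, sum_union (disjoint_diag_offDiag D), sum_diag]
    simp [agreement_self, hι, mul_comm]
  have := Nat.le_mul_self #D
  lia

theorem sum_erase_card_block_sq_add_card_oncePairs_le [DecidableEq ι] {C : Finset (ι → α)}
    (hι : Fintype.card ι ≠ 1) (hC : (C : Set (ι → α)).Pairwise fun u v ↦ agreement u v ≤ 2)
    (j : ι) (a : α) :
    ∑ i ∈ univ.erase j, ∑ b, #(block (block C j a) i b) ^ 2 + #(oncePairs (block C j a)) +
      2 * #(block C j a) ≤ #(block C j a) ^ 2 + Fintype.card ι * #(block C j a) := by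
  have h := sum_card_block_sq_add_card_oncePairs_le hι
    (hC.mono (coe_subset.2 (block_subset C j a)))
  rw [← add_sum_erase _ _ (mem_univ j), sum_card_block_block_sq] at h
  lia

end Agreement

section Deficiency

variable {ι α : Type*} [Fintype α] [DecidableEq α]

/-- How far the block at `i` and `a` falls short of `q * m` words, where `q` is the size of the
alphabet. It is used with `2 * m = q + 1`, where `q * m` is the largest possible size of a block;
it is an integer so that this bound reads `0 ≤ deficiency m C i a`. -/
def deficiency (m : ℕ) (C : Finset (ι → α)) (i : ι) (a : α) : ℤ :=
  Fintype.card α * m - #(block C i a)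

theorem sum_deficiency (m : ℕ) (C : Finset (ι → α)) (i : ι) :
    ∑ a, deficiency m C i a = Fintype.card α * (Fintype.card α * m) - #C :=
  sum_sub_card_block C i _

theorem sum_sub_card_block_block (m : ℕ) (C : Finset (ι → α)) (i j : ι) (a : α) :
    ∑ b, ((m : ℤ) - #(block (block C j a) i b)) = deficiency m C j a :=
  sum_sub_card_block (block C j a) i m

variable [Fintype ι] {m : ℕ} {C : Finset (ι → α)}

theorem sum_sq_sub_card_block_block_add_card_oncePairs_le [DecidableEq ι]
    (hι : Fintype.card ι = Fintype.card α + 3)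
    (hC : (C : Set (ι → α)).Pairwise fun u v ↦ agreement u v ≤ 2)
    (hm : 2 * m = Fintype.card α + 1) (j : ι) (a : α) :
    ∑ i ∈ univ.erase j, ∑ b, ((m : ℤ) - #(block (block C j a) i b)) ^ 2 +
        #(oncePairs (block C j a)) ≤
      deficiency m C j a * (deficiency m C j a + Fintype.card α + 1) := by
  have hcount := sum_erase_card_block_sq_add_card_oncePairs_le (by lia) hC j a
  have hq : (Fintype.card α : ℤ) = 2 * m - 1 := by lia
  zify at hcount
  simp only [sum_sub_card_block_sq, sum_add_distrib, sum_sub_distrib, sum_const,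
    card_univ_erase hι, nsmul_eq_mul, deficiency]
  push_cast [hι, hq] at hcount ⊢
  linarith

theorem deficiency_nonneg (hι : Fintype.card ι = Fintype.card α + 3)
    (hC : (C : Set (ι → α)).Pairwise fun u v ↦ agreement u v ≤ 2)
    (hm : 2 * m = Fintype.card α + 1) (j : ι) (a : α) : 0 ≤ deficiency m C j a := by
  classical
  set d := deficiency m C j a with hd
  set q : ℤ := (Fintype.card α : ℤ)
  have hq0 : 0 < q := Int.natCast_pos.2 (Fintype.card_pos_iff.2 ⟨a⟩)
  have hsq (i : ι) : d ^ 2 ≤ q * ∑ b, ((m : ℤ) - #(block (block C j a) i b)) ^ 2 := by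
    rw [hd, ← sum_sub_card_block_block m C i j a]
    exact sq_sum_le_card_mul_sum_sq
  have hsum : (q + 2) * d ^ 2 ≤ q * (d * (d + q + 1)) := by
    calc
      (q + 2) * d ^ 2 = ∑ i ∈ univ.erase j, d ^ 2 := by
        simp [card_univ_erase hι, q]
      _ ≤ q * ∑ i ∈ univ.erase j, ∑ b, ((m : ℤ) - #(block (block C j a) i b)) ^ 2 := by
        rw [mul_sum]
        exact sum_le_sum fun i _ ↦ hsq i
      _ ≤ q * (d * (d + q + 1)) := by
        have := sum_sq_sub_card_block_block_add_card_oncePairs_le hι hC hm j a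
        exact mul_le_mul_of_nonneg_left (by lia) hq0.le
  have hquad : 2 * d ^ 2 ≤ q * (q + 1) * d := by linarith
  have hcoeff : 0 < q * (q + 1) := mul_pos hq0 (by lia)
  exact nonneg_of_mul_nonneg_right ((by positivity : 0 ≤ 2 * d ^ 2).trans hquad) hcoeff

theorem card_oncePairs_block_le (hι : Fintype.card ι = Fintype.card α + 3)
    (hC : (C : Set (ι → α)).Pairwise fun u v ↦ agreement u v ≤ 2)
    (hm : 2 * m = Fintype.card α + 1) (j : ι) (a : α) :
    (#(oncePairs (block C j a)) : ℤ) ≤ deficiency m C j a * (deficiency m C j a - 1) := by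
  classical
  have hle : (Fintype.card α + 2) * deficiency m C j a ≤
      ∑ i ∈ univ.erase j, ∑ b, ((m : ℤ) - #(block (block C j a) i b)) ^ 2 := by
    calc
      (Fintype.card α + 2) * deficiency m C j a = ∑ _i ∈ univ.erase j, deficiency m C j a := by
        simp [card_univ_erase hι]
      _ ≤ ∑ i ∈ univ.erase j, ∑ b, ((m : ℤ) - #(block (block C j a) i b)) ^ 2 :=
        sum_le_sum fun i _ ↦ (sum_sub_card_block_block m C i j a).symm.trans_le
          (sum_le_sum fun b _ ↦ Int.le_self_sq _)
  have := sum_sq_sub_card_block_block_add_card_oncePairs_le hι hC hm j a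
  linarith

theorem card_block_block_of_deficiency_eq_zero (hι : Fintype.card ι = Fintype.card α + 3)
    (hC : (C : Set (ι → α)).Pairwise fun u v ↦ agreement u v ≤ 2)
    (hm : 2 * m = Fintype.card α + 1) {j : ι} {a : α} (hd : deficiency m C j a = 0)
    {i : ι} (hij : i ≠ j) (b : α) : #(block (block C j a) i b) = m := by
  classical
  have hle := sum_sq_sub_card_block_block_add_card_oncePairs_le hι hC hm j a
  rw [hd, zero_mul] at hle
  have hterm : ((m : ℤ) - #(block (block C j a) i b)) ^ 2 ≤ 0 := by
    calc
      ((m : ℤ) - #(block (block C j a) i b)) ^ 2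
        ≤ ∑ b, ((m : ℤ) - #(block (block C j a) i b)) ^ 2 :=
        single_le_sum (f := fun b ↦ ((m : ℤ) - #(block (block C j a) i b)) ^ 2)
          (fun b _ ↦ sq_nonneg _) (mem_univ b)
      _ ≤ ∑ i ∈ univ.erase j, ∑ b, ((m : ℤ) - #(block (block C j a) i b)) ^ 2 :=
        single_le_sum (f := fun i ↦ ∑ b, ((m : ℤ) - #(block (block C j a) i b)) ^ 2)
          (fun _ _ ↦ sum_nonneg fun b _ ↦ sq_nonneg _) (mem_erase.2 ⟨hij, mem_univ i⟩)
      _ ≤ 0 := by lia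
  have hzero := (sq_nonpos_iff _).1 hterm
  lia

theorem exists_agreement_eq_one_of_deficiency_eq_zero (hι : Fintype.card ι = Fintype.card α + 3)
    (hC : (C : Set (ι → α)).Pairwise fun u v ↦ agreement u v ≤ 2)
    (hm : 2 * m = Fintype.card α + 1) (hodd : Odd m) {j : ι} {a : α}
    (hd : deficiency m C j a = 0) {u : ι → α} (hu : u ∈ C) (hua : u j ≠ a) :
    ∃ v ∈ block C j a, agreement u v = 1 := by
  classical
  refine exists_agreement_eq_one_of_odd_sum (fun v hv ↦ ?_) ?_
  · obtain ⟨hvC, hva⟩ := mem_block.1 hv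
    exact hC hu hvC fun huv ↦ hua (huv ▸ hva)
  · have hsum : ∑ v ∈ block C j a, agreement u v = (Fintype.card α + 2) * m := by
      rw [sum_agreement_eq_sum_card_block, ← add_sum_erase _ _ (mem_univ j),
        block_block_of_ne hua.symm, card_empty, zero_add,
        sum_congr rfl fun i hi ↦
          card_block_block_of_deficiency_eq_zero hι hC hm hd (ne_of_mem_erase hi) (u i),
        sum_const, card_univ_erase hι, smul_eq_mul]
    rw [hsum]
    exact Odd.mul ⟨m, by lia⟩ hodd

theorem two_mul_card_sub_le_card_oncePairs (hι : Fintype.card ι = Fintype.card α + 3)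
    (hC : (C : Set (ι → α)).Pairwise fun u v ↦ agreement u v ≤ 2)
    (hm : 2 * m = Fintype.card α + 1) (hodd : Odd m) {j : ι} {a : α}
    (hd : deficiency m C j a = 0) :
    2 * ((#C : ℤ) - Fintype.card α * m) ≤ #(oncePairs C) := by
  have : Std.Symm fun u v : ι → α ↦ agreement u v = 1 :=
    ⟨fun u v huv ↦ (agreement_comm v u).trans huv⟩
  have hpairs : 2 * #(C \ block C j a) ≤ #(oncePairs C) := by
    refine two_mul_card_sdiff_le_card_interedges (block_subset C j a) fun u hu ↦ ?_
    obtain ⟨huC, hua⟩ := mem_sdiff.1 hu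
    exact exists_agreement_eq_one_of_deficiency_eq_zero hι hC hm hodd hd huC
      fun h ↦ hua (mem_block.2 ⟨huC, h⟩)
  have hcard := card_sdiff_add_card_eq_card (block_subset C j a)
  rw [deficiency] at hd
  lia

theorem card_oncePairs_le (hι : Fintype.card ι = Fintype.card α + 3)
    (hC : (C : Set (ι → α)).Pairwise fun u v ↦ agreement u v ≤ 2)
    (hm : 2 * m = Fintype.card α + 1) {T : ℤ} (hT : ∀ i, ∑ a, deficiency m C i a = T) :
    (#(oncePairs C) : ℤ) ≤ (Fintype.card α + 3) * (T * (T - 1)) := by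
  have hcoord (i : ι) : ∑ a, (#(oncePairs (block C i a)) : ℤ) ≤ T * (T - 1) := by
    calc
      ∑ a, (#(oncePairs (block C i a)) : ℤ)
        ≤ ∑ a, deficiency m C i a * (deficiency m C i a - 1) :=
        sum_le_sum fun a _ ↦ card_oncePairs_block_le hι hC hm i a
      _ ≤ ∑ a, deficiency m C i a * (T - 1) := sum_le_sum fun a _ ↦ by
        have hnonneg := deficiency_nonneg hι hC hm i
        have hle := single_le_sum (fun b _ ↦ hnonneg b) (mem_univ a)
        rw [hT] at hle
        exact mul_le_mul_of_nonneg_left (by lia) (hnonneg a)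
      _ = T * (T - 1) := by rw [← sum_mul, hT]
  calc
    (#(oncePairs C) : ℤ) = ∑ i, ∑ a, (#(oncePairs (block C i a)) : ℤ) := by
      exact_mod_cast card_oncePairs C
    _ ≤ ∑ _i : ι, T * (T - 1) := sum_le_sum fun i _ ↦ hcoord i
    _ = (Fintype.card α + 3) * (T * (T - 1)) := by simp [hι]

theorem exists_deficiency_eq_zero (hι : Fintype.card ι = Fintype.card α + 3)
    (hC : (C : Set (ι → α)).Pairwise fun u v ↦ agreement u v ≤ 2)
    (hm : 2 * m = Fintype.card α + 1) {j : ι} (hlt : ∑ a, deficiency m C j a < Fintype.card α) :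
    ∃ a, deficiency m C j a = 0 := by
  obtain ⟨a, -, ha⟩ := exists_lt_of_sum_lt (s := univ) (f := deficiency m C j) (g := 1)
    (by simpa using hlt)
  exact ⟨a, (Int.lt_add_one_iff.1 ha).antisymm (deficiency_nonneg hι hC hm j a)⟩

theorem card_le_sum_deficiency (hι : Fintype.card ι = Fintype.card α + 3)
    (hC : (C : Set (ι → α)).Pairwise fun u v ↦ agreement u v ≤ 2)
    (hm : 2 * m = Fintype.card α + 1) (hodd : Odd m) (hα : 1 < Fintype.card α) (j : ι) :
    Fintype.card α ≤ ∑ a, deficiency m C j a := by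
  by_contra! hlt
  obtain ⟨a, ha⟩ := exists_deficiency_eq_zero hι hC hm hlt
  have hlower := two_mul_card_sub_le_card_oncePairs hι hC hm hodd ha
  set q : ℤ := (Fintype.card α : ℤ)
  set T := ∑ a, deficiency m C j a with hT
  have hupper := card_oncePairs_le hι hC hm (T := T) fun i ↦ by
    rw [hT, sum_deficiency, sum_deficiency]
  have hT0 : 0 ≤ T := sum_nonneg fun a _ ↦ deficiency_nonneg hι hC hm j a
  have hTsq : T * (T - 1) ≤ (q - 1) * (q - 2) := by nlinarith
  have hm' : 2 * (m : ℤ) = q + 1 := by lia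
  have hCcard : 2 * ((#C : ℤ) - q * m) = (q - 1) * (q * (q + 1)) - 2 * T := by
    rw [hT, sum_deficiency]
    linear_combination (q ^ 2 - q) * hm'
  have hcontra : (q - 1) ^ 2 * (q + 2) ≤ (q - 1) * ((q + 3) * (q - 2)) := by
    calc
      (q - 1) ^ 2 * (q + 2) = (q - 1) * (q * (q + 1)) - 2 * (q - 1) := by ring
      _ ≤ 2 * (#C - q * m) := by lia
      _ ≤ (q + 3) * (T * (T - 1)) := hlower.trans hupper
      _ ≤ (q + 3) * ((q - 1) * (q - 2)) := by gcongr
      _ = (q - 1) * ((q + 3) * (q - 2)) := by ring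
  linarith [show 1 < q from Nat.one_lt_cast.2 hα]

end Deficiency

end HammingCode

theorem Aq_q_plus_three_bound_general {ι α : Type*} [Fintype ι] [Fintype α] [DecidableEq α]
    (hι : Fintype.card ι = Fintype.card α + 3) (hα : Fintype.card α % 4 = 1)
    (hα1 : Fintype.card α ≠ 1) (C : Finset (ι → α))
    (hC : ∀ u ∈ C, ∀ v ∈ C, u ≠ v → Fintype.card α + 1 ≤ hammingDist u v) :
    #C ≤ (Fintype.card α - 1) * Fintype.card α * (Fintype.card α + 2) / 2 := by
  obtain ⟨r, hr⟩ : ∃ r, Fintype.card α = 4 * r + 1 := ⟨Fintype.card α / 4, by lia⟩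
  have hagree : (C : Set (ι → α)).Pairwise fun u v ↦ HammingCode.agreement u v ≤ 2 :=
    fun u hu v hv huv ↦ by
      have := HammingCode.agreement_add_hammingDist u v
      have := hC u hu v hv huv
      lia
  obtain ⟨j⟩ : Nonempty ι := Fintype.card_pos_iff.1 (by lia)
  have hdef := HammingCode.card_le_sum_deficiency (m := 2 * r + 1) hι hagree (by lia)
    (odd_two_mul_add_one r) (by lia) j
  rw [HammingCode.sum_deficiency] at hdef
  rw [hr] at hdef ⊢
  rw [Nat.le_div_iff_mul_le two_pos, Nat.add_sub_cancel]
  zify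
  push_cast at hdef
  linarith

/-- If `q ≡ 1 (mod 4)` and `q ≠ 1`, then `A_q(q+3, q+1) ≤ (q-1)q(q+2)/2`:
every code `C ⊆ (Fin q)^(q+3)` with minimum Hamming distance at least `q+1`
has cardinality at most `(q-1)q(q+2)/2`. -/
theorem Aq_q_plus_three_bound (q : ℕ) (hq0 : 0 < q) (hq4 : q % 4 = 1) (hq1 : q ≠ 1)
    (C : Finset (Fin (q + 3) → Fin q))
    (hC : ∀ u ∈ C, ∀ v ∈ C, u ≠ v → q + 1 ≤ hammingDist u v) :
    C.card ≤ (q - 1) * q * (q + 2) / 2 := by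
  simpa using Aq_q_plus_three_bound_general (by simp) (by simpa using hq4) (by simpa using hq1) C
    (by simpa using hC)
end

section
/- Let q ≥ 2, n, d, m be positive integers and let C ⊆ (Fin q)^n be a code with minimum Hamming distance at least d. Fix a coordinate j and a symbol β, and let B := {w ∈ C : w_j = β} (a block for column j). Suppose that for every coordinate i ≠ j and every symbol α ∈ Fin q, exactly m words of B have α in coordinate i. If n − d does not divide m(n−1), then for every u ∈ C \ B there exists v ∈ B with d_H(u,v) ∉ {d, n}. -/
/-!
Count the pairs `(v, i)` with `v ∈ B` and `v i = u i`. Column `j` contributes nothing and each of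
the other `n - 1` columns contributes `m`, so there are `m(n - 1)` pairs; on the other hand each `v`
contributes `n - d_H(u, v)`. If every distance were `d` or `n`, every contribution would be `n - d`
or `0`, and `n - d` would divide `m(n - 1)`.
-/

section Agreement

open Finset

variable {ι : Type*} [Fintype ι] {α : ι → Type*} [∀ i, DecidableEq (α i)]

theorem card_filter_eq_add_hammingDist (u v : ∀ i, α i) :
    #{i | u i = v i} + hammingDist u v = Fintype.card ι :=
  card_filter_add_card_filter_not _

theorem sum_card_sub_hammingDist (B : Finset (∀ i, α i)) (u : ∀ i, α i) :
    ∑ v ∈ B, ((Fintype.card ι : ℤ) - hammingDist u v) = ∑ i, (#{v ∈ B | u i = v i} : ℤ) := by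
  have agreements (v : ∀ i, α i) :
      (Fintype.card ι : ℤ) - hammingDist u v = #{i | u i = v i} := by
    rw [← card_filter_eq_add_hammingDist u v]
    push_cast
    ring
  simp_rw [agreements]
  exact_mod_cast sum_card_bipartiteAbove_eq_sum_card_bipartiteBelow
    fun (v : ∀ i, α i) i => u i = v i

theorem sum_card_sub_hammingDist_of_card_filter_eq {B : Finset (∀ i, α i)} {u : ∀ i, α i}
    {j : ι} {m : ℕ} (hj : ∀ v ∈ B, u j ≠ v j) (hm : ∀ i ≠ j, #{v ∈ B | u i = v i} = m) :
    ∑ v ∈ B, ((Fintype.card ι : ℤ) - hammingDist u v) = m * ((Fintype.card ι : ℤ) - 1) := by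
  classical
  have column (i : ι) : (#{v ∈ B | u i = v i} : ℤ) = m - if i = j then (m : ℤ) else 0 := by
    obtain rfl | hi := eq_or_ne i j
    · simp [filter_false_of_mem hj]
    · simp [hi, hm i hi]
  calc
    _ = ∑ i, (#{v ∈ B | u i = v i} : ℤ) := sum_card_sub_hammingDist B u
    _ = ∑ i, ((m : ℤ) - if i = j then (m : ℤ) else 0) := sum_congr rfl fun i _ => column i
    _ = m * ((Fintype.card ι : ℤ) - 1) := by simp; ring

theorem divisibility_argument_general {B : Finset (∀ i, α i)} {u : ∀ i, α i} {j : ι} {d m : ℕ}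
    (hj : ∀ v ∈ B, u j ≠ v j) (hm : ∀ i ≠ j, #{v ∈ B | u i = v i} = m)
    (hndvd : ¬ ((Fintype.card ι : ℤ) - d ∣ m * ((Fintype.card ι : ℤ) - 1))) :
    ∃ v ∈ B, hammingDist u v ≠ d ∧ hammingDist u v ≠ Fintype.card ι := by
  obtain ⟨v, hv, hndvd_v⟩ :
      ∃ v ∈ B, ¬ ((Fintype.card ι : ℤ) - d ∣ (Fintype.card ι : ℤ) - hammingDist u v) := by
    rw [← sum_card_sub_hammingDist_of_card_filter_eq hj hm] at hndvd
    contrapose! hndvd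
    exact dvd_sum hndvd
  refine ⟨v, hv, fun hd => hndvd_v ?_, fun hn => hndvd_v ?_⟩
  · rw [hd]
  · simp [hn]

end Agreement

/-- The divisibility argument (Proposition 4.2 in the thesis): let `C ⊆ (Fin q)^n`
be a code with minimum Hamming distance at least `d`, and let
`B = {w ∈ C : w j = β}` be a block for column `j` containing every symbol exactly
`m` times in every column other than `j`.  If `n - d` does not divide `m(n-1)`,
then for each `u ∈ C \ B` there is a word `v ∈ B` with `d_H(u,v) ∉ {d, n}`. -/
theorem divisibility_argument (q n d m : ℕ)
    (hq : 2 ≤ q) (hn : 0 < n) (hd : 0 < d) (hm : 0 < m)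
    (C : Finset (Fin n → Fin q))
    (hC : ∀ u ∈ C, ∀ v ∈ C, u ≠ v → d ≤ hammingDist u v)
    (j : Fin n) (β : Fin q)
    (hblock : ∀ i : Fin n, i ≠ j → ∀ α : Fin q,
      (((C.filter (fun w => w j = β)).filter (fun w => w i = α)).card = m))
    (hndvd : ¬ ((n : ℤ) - (d : ℤ) ∣ (m : ℤ) * ((n : ℤ) - 1)))
    (u : Fin n → Fin q) (hu : u ∈ C) (huB : u ∉ C.filter (fun w => w j = β)) :
    ∃ v ∈ C.filter (fun w => w j = β),
      hammingDist u v ≠ d ∧ hammingDist u v ≠ n := by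
  have hj : ∀ v ∈ C.filter (fun w => w j = β), u j ≠ v j := fun v hv huv =>
    huB (Finset.mem_filter.2 ⟨hu, huv.trans (Finset.mem_filter.1 hv).2⟩)
  simpa only [Fintype.card_fin] using divisibility_argument_general hj
    (fun i hi => by simpa only [eq_comm] using hblock i hi (u i))
    (by simpa only [Fintype.card_fin] using hndvd)
end

section
/- Every code C ⊆ (Fin 5)^7 with |C| = 14 and minimum Hamming distance at least 6 can be extended to a code of cardinality 15 with minimum Hamming distance at least 6; that is, there exists a word u ∈ (Fin 5)^7 with u ∉ C such that d_H(u,w) ≥ 6 for all w ∈ C. -/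
/-!
Let `C` have `M` words of length `n` over `q` symbols, with minimum distance `d`, where
`M + 1 = q (k + 1)` and `M d = n (M - k)`. In each coordinate the symbol counts `x` are integers
summing to `M`, and `0 ≤ (x - k) (x - (k + 1))`. Counting pairs of agreeing words, the sum of these
products plus the total excess of the pairwise distances over `d` is exactly `0`, so that `C` is
equidistant and every count is `k` or `k + 1`. Hence in each coordinate exactly one symbol occurs
`k` times and all the others `k + 1` times; the rare symbols form the new word, and counting the
agreements of `w ∈ C` with all of `C` puts it at distance `d` from `w`.

For `q = 5`, `n = 7`, `d = 6`, `M = 14` one has `k = 2`.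
-/

open Finset
open Fintype (card)

section SymbolCount

variable {ι α : Type*} [DecidableEq α]

/-- The number of words of the code `C` that have the symbol `a` in coordinate `i`. -/
def symbolCount (C : Finset (ι → α)) (i : ι) (a : α) : ℕ :=
  #{v ∈ C | v i = a}

theorem sum_symbolCount [Fintype α] (C : Finset (ι → α)) (i : ι) :
    ∑ a, symbolCount C i a = #C :=
  (card_eq_sum_card_fiberwise fun v _ => mem_univ (v i)).symm

theorem sum_symbolCount_apply [Fintype α] (C : Finset (ι → α)) (i : ι) :
    ∑ u ∈ C, symbolCount C i (u i) = ∑ a, symbolCount C i a ^ 2 := by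
  rw [← sum_fiberwise C (fun u => u i)]
  refine sum_congr rfl fun a _ => ?_
  calc ∑ u ∈ C with u i = a, symbolCount C i (u i)
      = ∑ u ∈ C with u i = a, symbolCount C i a :=
        sum_congr rfl fun u hu => by rw [(mem_filter.1 hu).2]
    _ = symbolCount C i a ^ 2 := by rw [sum_const, smul_eq_mul, sq, symbolCount]

theorem hammingDist_eq_sum_ite [Fintype ι] (u v : ι → α) :
    hammingDist u v = ∑ i, if u i ≠ v i then 1 else 0 := by
  rw [hammingDist, card_filter]

theorem sum_symbolCount_apply_add_sum_hammingDist [Fintype ι] (C : Finset (ι → α)) (u : ι → α) :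
    ∑ i, symbolCount C i (u i) + ∑ v ∈ C, hammingDist u v = #C * card ι := by
  simp only [hammingDist_eq_sum_ite]
  rw [sum_comm, ← sum_add_distrib]
  have agree_or_differ (i : ι) :
      symbolCount C i (u i) + ∑ v ∈ C, (if u i ≠ v i then 1 else 0) = #C := by
    rw [symbolCount, ← card_filter]
    simpa only [ne_eq, eq_comm] using card_filter_add_card_filter_not (s := C) (fun v => v i = u i)
  simp only [agree_or_differ, sum_const, card_univ, smul_eq_mul, mul_comm]

theorem sum_symbolCount_sq_add_sum_hammingDist [Fintype ι] [Fintype α] (C : Finset (ι → α)) :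
    ∑ i, ∑ a, symbolCount C i a ^ 2 + ∑ p ∈ C.offDiag, hammingDist p.1 p.2 =
      #C ^ 2 * card ι := by
  have offDiag_eq_product :
      ∑ p ∈ C.offDiag, hammingDist p.1 p.2 = ∑ u ∈ C, ∑ v ∈ C, hammingDist u v := by
    rw [← sum_product']
    refine sum_subset (fun p hp => by grind) fun p hp hp' => ?_
    simp_all only [mem_product, mem_offDiag, true_and, not_not, hammingDist_self, ne_eq]
  calc ∑ i, ∑ a, symbolCount C i a ^ 2 + ∑ p ∈ C.offDiag, hammingDist p.1 p.2
      = ∑ u ∈ C, (∑ i, symbolCount C i (u i) + ∑ v ∈ C, hammingDist u v) := by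
        simp only [offDiag_eq_product, ← sum_symbolCount_apply, sum_add_distrib]
        rw [sum_comm]
    _ = #C ^ 2 * card ι := by
        simp only [sum_symbolCount_apply_add_sum_hammingDist, sum_const, smul_eq_mul]
        ring

theorem sum_hammingDist_add_of_pairwise_eq [Fintype ι] {C : Finset (ι → α)} {d : ℕ}
    (hC : (C : Set (ι → α)).Pairwise (hammingDist · · = d)) {w : ι → α} (hw : w ∈ C) :
    ∑ v ∈ C, hammingDist w v + d = #C * d := by
  rw [← add_sum_erase C _ hw, hammingDist_self, zero_add,
    sum_congr rfl fun v hv => hC hw (mem_of_mem_erase hv) (ne_of_mem_erase hv).symm,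
    sum_const, smul_eq_mul, ← Nat.succ_mul, Nat.succ_eq_add_one, card_erase_add_one hw]

end SymbolCount

theorem sub_mul_sub_add_one_nonneg (x k : ℤ) : 0 ≤ (x - k) * (x - (k + 1)) := by
  rcases le_or_gt x k with h | h
  · exact mul_nonneg_of_nonpos_of_nonpos (by lia) (by lia)
  · exact mul_nonneg (by lia) (by lia)

theorem exists_forall_eq_add_ite_ne {α : Type*} [Fintype α] [DecidableEq α] {k : ℕ} {f : α → ℕ}
    (hf : ∀ a, f a = k ∨ f a = k + 1) (hsum : ∑ a, f a + 1 = card α * (k + 1)) :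
    ∃ a, ∀ b, f b = k + if a ≠ b then 1 else 0 := by
  have sum_add_card_rare : ∑ a, f a + #{a | f a = k} = card α * (k + 1) := by
    rw [card_filter, ← sum_add_distrib, ← smul_eq_mul, ← card_univ, ← sum_const]
    exact sum_congr rfl fun a _ => by grind
  obtain ⟨a, ha⟩ : ∃ a, ({a | f a = k} : Finset α) = {a} := card_eq_one.1 (by lia)
  refine ⟨a, fun b => ?_⟩
  have rare_iff : f b = k ↔ b = a := by simpa using Finset.ext_iff.1 ha b
  grind

section Tight

variable {ι α : Type*} [Fintype ι] [Fintype α] [DecidableEq α] {C : Finset (ι → α)} {d k : ℕ}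

theorem sum_defect_add_sum_excess_eq_zero (hcard : #C + 1 = card α * (k + 1))
    (htight : #C * d + card ι * k = #C * card ι) :
    ∑ i, ∑ a, ((symbolCount C i a : ℤ) - k) * (symbolCount C i a - (k + 1)) +
      ∑ p ∈ C.offDiag, ((hammingDist p.1 p.2 : ℤ) - d) = 0 := by
  have sum_column (i : ι) :
      ∑ a, ((symbolCount C i a : ℤ) - k) * (symbolCount C i a - (k + 1)) =
        ∑ a, (symbolCount C i a : ℤ) ^ 2 - (2 * k + 1) * #C + card α * (k * (k + 1)) := by
    have sum_count : ∑ a, (symbolCount C i a : ℤ) = #C := mod_cast sum_symbolCount C i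
    calc _ = ∑ a, ((symbolCount C i a : ℤ) ^ 2 - (2 * k + 1) * symbolCount C i a
              + k * (k + 1)) := sum_congr rfl fun a _ => by ring
      _ = _ := by
        rw [sum_add_distrib, sum_sub_distrib, ← mul_sum, sum_count, sum_const, card_univ,
          nsmul_eq_mul]
  have card_offDiag : (#C.offDiag : ℤ) = #C * #C - #C := by
    rw [offDiag_card, Nat.cast_sub (Nat.le_mul_self _), Nat.cast_mul]
  have count_pairs :
      ∑ i, ∑ a, (symbolCount C i a : ℤ) ^ 2 + ∑ p ∈ C.offDiag, (hammingDist p.1 p.2 : ℤ) =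
        #C ^ 2 * card ι := mod_cast sum_symbolCount_sq_add_sum_hammingDist C
  simp only [sum_column, sum_add_distrib, sum_sub_distrib, sum_const, nsmul_eq_mul, card_univ,
    card_offDiag]
  zify at hcard htight
  linear_combination count_pairs - card ι * k * hcard - (#C - 1) * htight

theorem symbolCount_eq_and_hammingDist_eq (hcard : #C + 1 = card α * (k + 1))
    (htight : #C * d + card ι * k = #C * card ι)
    (hC : (C : Set (ι → α)).Pairwise (d ≤ hammingDist · ·)) :
    (∀ i a, symbolCount C i a = k ∨ symbolCount C i a = k + 1) ∧
      (C : Set (ι → α)).Pairwise (hammingDist · · = d) := by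
  have defect_nonneg (i : ι) (a : α) :=
    sub_mul_sub_add_one_nonneg (symbolCount C i a) k
  have column_nonneg (i : ι) := sum_nonneg fun a (_ : a ∈ univ) => defect_nonneg i a
  have excess_nonneg : ∀ p ∈ C.offDiag, 0 ≤ (hammingDist p.1 p.2 : ℤ) - d := fun p hp => by
    obtain ⟨hu, hv, huv⟩ := mem_offDiag.1 hp
    exact sub_nonneg.2 (mod_cast hC hu hv huv)
  obtain ⟨defect_zero, excess_zero⟩ :=
    (add_eq_zero_iff_of_nonneg (sum_nonneg fun i _ => column_nonneg i)
      (sum_nonneg excess_nonneg)).1 (sum_defect_add_sum_excess_eq_zero hcard htight)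
  constructor
  · intro i a
    have column_zero := (sum_eq_zero_iff_of_nonneg fun i _ => column_nonneg i).1 defect_zero i
      (mem_univ i)
    have := (sum_eq_zero_iff_of_nonneg fun a _ => defect_nonneg i a).1 column_zero a (mem_univ a)
    exact (mul_eq_zero.1 this).imp (by lia) (by lia)
  · intro u hu v hv huv
    have := (sum_eq_zero_iff_of_nonneg excess_nonneg).1 excess_zero (u, v)
      (mem_offDiag.2 ⟨hu, hv, huv⟩)
    exact Int.ofNat_inj.1 (sub_eq_zero.1 this)

theorem extend_7_6_5_code_general (hd : 0 < d) (hcard : #C + 1 = card α * (k + 1))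
    (htight : #C * d + card ι * k = #C * card ι)
    (hC : (C : Set (ι → α)).Pairwise (d ≤ hammingDist · ·)) :
    ∃ u, u ∉ C ∧ ∀ w ∈ C, hammingDist u w = d := by
  obtain ⟨count_eq, dist_eq⟩ := symbolCount_eq_and_hammingDist_eq hcard htight hC
  choose u hu using fun i =>
    exists_forall_eq_add_ite_ne (count_eq i) ((congrArg (· + 1) (sum_symbolCount C i)).trans hcard)
  have dist_u : ∀ w ∈ C, hammingDist u w = d := fun w hw => by
    have sum_count : ∑ i, symbolCount C i (w i) = card ι * k + hammingDist u w := by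
      simp only [hu, sum_add_distrib, sum_const, card_univ, smul_eq_mul, hammingDist_eq_sum_ite]
    have count_agreements := sum_symbolCount_apply_add_sum_hammingDist C w
    have equidistant := sum_hammingDist_add_of_pairwise_eq dist_eq hw
    lia
  exact ⟨u, fun h => hd.ne (hammingDist_self u ▸ dist_u u h), dist_u⟩

end Tight

/-- Every `(7,6)_5`-code of cardinality 14 extends to a `(7,6)_5`-code of
cardinality 15: there is a word `u ∉ C` with Hamming distance at least 6 to
every word of `C`. -/
theorem extend_7_6_5_code (C : Finset (Fin 7 → Fin 5)) (hcard : C.card = 14)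
    (hC : ∀ u ∈ C, ∀ v ∈ C, u ≠ v → 6 ≤ hammingDist u v) :
    ∃ u : Fin 7 → Fin 5, u ∉ C ∧ ∀ w ∈ C, 6 ≤ hammingDist u w := by
  obtain ⟨u, hu, hdist⟩ := extend_7_6_5_code_general (C := C) (d := 6) (k := 2) (by simp)
    (by simp [hcard]) (by simp [hcard]) fun u hu v hv => hC u hu v hv
  exact ⟨u, hu, fun w hw => (hdist w hw).ge⟩
end

section
/- A_5(9,6) ≤ 325, A_5(10,6) ≤ 1625 and A_5(11,6) ≤ 8125: every code C ⊆ (Fin 5)^n with minimum Hamming distance at least 6 has cardinality at most 325 if n = 9, at most 1625 if n = 10, and at most 8125 if n = 11. -/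
/-!
Deleting a column and keeping the words with its most frequent symbol shortens a code by a factor of
at most five, so it suffices to exclude 66 words of length eight that agree pairwise at most twice.
In every column such a code splits into five slices of at most 15 words of length seven that agree
pairwise at most once. Counting pairs of words that agree exactly once, summed over all columns,
relates the pairs inside the slices, which are few by second moments, to the pairs between them, of
which there are many for the following reason.

A slice of 15 words is a Kirkman triple system `P`, and by parity each word of another slice agrees
exactly once with some word of `P`. A slice of 14 words is a system `P` without one word `w`, and at
most 16 words agree zero or two times with each of its words. Indeed, the parities of the fibers of
the subsets of `P` are singular vectors of a quadratic space of minus type. There are so few of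
these that positivity of a Riesz product yields a nonempty subset of `P` with all fibers even. Its
complement in `P` is a Fano plane through `w`, which has a normal form from which a small search
recovers all possible systems `P`.
-/

open Finset

namespace AgreementCode

section Fiber

variable {ι α : Type*} [DecidableEq α] {X Y : Finset (ι → α)} {k : ι} {s : α} {u : ι → α}

/-- The words of `X` with symbol `s` in column `k`. -/
def fiber (X : Finset (ι → α)) (k : ι) (s : α) : Finset (ι → α) := {u ∈ X | u k = s}

theorem mem_fiber : u ∈ fiber X k s ↔ u ∈ X ∧ u k = s := mem_filter

theorem fiber_mono (h : X ⊆ Y) : fiber X k s ⊆ fiber Y k s :=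
  filter_subset_filter _ h

theorem card_fiber_sdiff [DecidableEq (ι → α)] (h : X ⊆ Y) :
    #(fiber (Y \ X) k s) = #(fiber Y k s) - #(fiber X k s) := by
  rw [← card_sdiff_of_subset (fiber_mono h)]
  congr 1
  ext u
  simp only [mem_fiber, mem_sdiff]
  tauto

variable [Fintype α]

theorem sum_card_fiber (X : Finset (ι → α)) (k : ι) : ∑ s, #(fiber X k s) = #X :=
  (card_eq_sum_card_fiberwise fun _ _ => mem_univ _).symm

theorem prod_apply_eq_prod_pow_card_fiber {M : Type*} [CommMonoid M] (X : Finset (ι → α)) (k : ι)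
    (f : α → M) : ∏ u ∈ X, f (u k) = ∏ s, f s ^ #(fiber X k s) := by
  rw [← prod_fiberwise' X (fun u => u k) f]
  exact prod_congr rfl fun s _ => prod_const _

theorem sum_fiber {M : Type*} [AddCommMonoid M] (X : Finset (ι → α)) (k : ι) (f : (ι → α) → M) :
    ∑ s, ∑ u ∈ fiber X k s, f u = ∑ u ∈ X, f u :=
  sum_fiberwise X (fun u => u k) f

end Fiber

section Agreement

variable {ι α : Type*} [Fintype ι] [DecidableEq α]

/-- The number of coordinates in which two words agree, complementary to the Hamming distance. -/
def agreement (u v : ι → α) : ℕ := #{k | u k = v k}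

theorem agreement_comm (u v : ι → α) : agreement u v = agreement v u := by
  simp only [agreement, eq_comm]

theorem agreement_self (u : ι → α) : agreement u u = Fintype.card ι := by
  simp [agreement]

theorem agreement_add_hammingDist (u v : ι → α) :
    agreement u v + hammingDist u v = Fintype.card ι :=
  card_filter_add_card_filter_not fun k => u k = v k

theorem sum_agreement (X : Finset (ι → α)) (u : ι → α) :
    ∑ v ∈ X, agreement u v = ∑ k, #(fiber X k (u k)) := by
  simp only [agreement, fiber, card_filter, eq_comm (a := u _)]
  exact sum_comm

theorem sum_sq_card_fiber [Fintype α] (X : Finset (ι → α)) :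
    ∑ k, ∑ s, #(fiber X k s) ^ 2 = ∑ u ∈ X, ∑ v ∈ X, agreement u v := by
  simp only [sum_agreement]
  rw [sum_comm (s := X)]
  refine sum_congr rfl fun k _ => ?_
  rw [← sum_fiber X k fun u => #(fiber X k (u k))]
  refine sum_congr rfl fun s _ => ?_
  rw [sq, ← smul_eq_mul, ← sum_const]
  exact sum_congr rfl fun u hu => by rw [(mem_fiber.1 hu).2]

theorem sum_sq_card_fiber_of_pairwise [Fintype α] {X : Finset (ι → α)}
    (hX : (X : Set (ι → α)).Pairwise fun u v => agreement u v = 1) :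
    ∑ k, ∑ s, (#(fiber X k s) : ℤ) ^ 2 = #X * (Fintype.card ι + #X - 1) := by
  have hsum (u) (hu : u ∈ X) : ∑ v ∈ X, (agreement u v : ℤ) = Fintype.card ι + #X - 1 := by
    have hone (v) (hv : v ∈ X.erase u) : (agreement u v : ℤ) = 1 := by
      exact_mod_cast hX hu (mem_of_mem_erase hv) (ne_of_mem_erase hv).symm
    rw [← add_sum_erase X _ hu, agreement_self, sum_congr rfl hone, ← card_erase_add_one hu]
    simp [add_sub_assoc]
  calc ∑ k, ∑ s, (#(fiber X k s) : ℤ) ^ 2 = ∑ u ∈ X, ∑ v ∈ X, (agreement u v : ℤ) := by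
        exact_mod_cast sum_sq_card_fiber X
    _ = _ := by rw [sum_congr rfl hsum, sum_const, nsmul_eq_mul]

end Agreement

section EvenSubset

variable {ι α : Type*} [DecidableEq α]

/-- The symbols occurring an odd number of times in column `k` of `X`. -/
def oddSymbols [Fintype α] (X : Finset (ι → α)) (k : ι) : Finset α := {s | Odd #(fiber X k s)}

theorem mem_oddSymbols [Fintype α] {X : Finset (ι → α)} {k : ι} {s : α} :
    s ∈ oddSymbols X k ↔ Odd #(fiber X k s) := by
  simp [oddSymbols]

theorem card_oddSymbols_add [Fintype α] (X : Finset (ι → α)) (k : ι) :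
    #(oddSymbols X k) + 2 * ∑ s, #(fiber X k s) / 2 = #X := by
  rw [← sum_card_fiber X k, oddSymbols, card_filter, mul_sum, ← sum_add_distrib]
  refine sum_congr rfl fun s _ => ?_
  split_ifs with h
  · rw [add_comm, Nat.two_mul_div_two_add_one_of_odd h]
  · rw [zero_add, Nat.two_mul_div_two_of_even (Nat.not_odd_iff_even.1 h)]

theorem sq_sub_self_modEq (x : ℕ) : (x : ℤ) ^ 2 - x ≡ 2 * (x / 2 : ℕ) [ZMOD 4] := by
  rw [Int.modEq_iff_dvd]
  obtain ⟨q, rfl | rfl⟩ := Nat.even_or_odd' x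
  · exact ⟨q - q ^ 2, by rw [Nat.mul_div_cancel_left q two_pos]; push_cast; ring⟩
  · exact ⟨- q ^ 2, by rw [show (2 * q + 1) / 2 = q by omega]; push_cast; ring⟩

/-- In the quadratic space of even symbol sets, with form `#e / 2` mod `2` summed over columns,
subsets of a code with pairwise agreement one are singular. -/
theorem even_sum_card_oddSymbols_div_two [Fintype ι] [Fintype α]
    (hι : Odd (Fintype.card ι)) {X : Finset (ι → α)}
    (hX : (X : Set (ι → α)).Pairwise fun u v => agreement u v = 1) :
    Even (∑ k, #(oddSymbols X k) / 2) := by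
  have hmod : 2 * ((∑ k, ∑ s, #(fiber X k s) / 2 : ℕ) : ℤ) ≡ 2 * (#X / 2 : ℕ) [ZMOD 4] := by
    calc 2 * ((∑ k, ∑ s, #(fiber X k s) / 2 : ℕ) : ℤ)
        = ∑ k : ι, ∑ s, 2 * ((#(fiber X k s) / 2 : ℕ) : ℤ) := by
          push_cast [mul_sum]; rfl
      _ ≡ ∑ k, ∑ s, ((#(fiber X k s) : ℤ) ^ 2 - #(fiber X k s)) [ZMOD 4] :=
          Int.ModEq.sum fun k _ => Int.ModEq.sum fun s _ => (sq_sub_self_modEq _).symm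
      _ = (#X : ℤ) ^ 2 - #X := by
          have hlin (k : ι) : ∑ s, (#(fiber X k s) : ℤ) = #X := mod_cast sum_card_fiber X k
          simp only [sum_sub_distrib, sum_sq_card_fiber_of_pairwise hX, hlin, sum_const, card_univ,
            nsmul_eq_mul]
          ring
      _ ≡ 2 * (#X / 2 : ℕ) [ZMOD 4] := sq_sub_self_modEq _
  have hsum : ∑ k, #(oddSymbols X k) / 2 + ∑ k, ∑ s, #(fiber X k s) / 2
      = Fintype.card ι * (#X / 2) := by
    rw [← sum_add_distrib, ← smul_eq_mul, ← card_univ, ← sum_const]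
    exact sum_congr rfl fun k _ => by have := card_oddSymbols_add X k; omega
  obtain ⟨m, hm⟩ := hι
  rw [hm, add_mul, one_mul, mul_assoc] at hsum
  generalize ∑ k, ∑ s, #(fiber X k s) / 2 = a at *
  rw [Int.ModEq] at hmod
  rw [Nat.even_iff]
  omega

theorem even_card_fiber_iff [Fintype α] (hα : Odd (Fintype.card α)) {X : Finset (ι → α)} {k : ι}
    (hX : oddSymbols X k = ∅ ∨ oddSymbols X k = univ) (s : α) : Even #(fiber X k s) ↔ Even #X := by
  have hcard := card_oddSymbols_add X k
  rw [← Nat.not_odd_iff_even, ← mem_oddSymbols]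
  rcases hX with h | h
  · simp only [h, notMem_empty, not_false_eq_true, true_iff]
    exact ⟨_, by rw [← hcard, h, card_empty, zero_add, two_mul]⟩
  · simp only [h, mem_univ, not_true, false_iff, Nat.not_even_iff_odd]
    rw [← hcard, h]
    exact hα.add_even (even_two_mul _)

/-- The sign of the symbol `s` under the character of `𝔽₂^α` attached to the symbol set `e`. -/
def symbolSign (e : Finset α) (s : α) : ℤ := if s ∈ e then -1 else 1

/-- The value at `c` of the character of `𝔽₂^α` attached to the symbol set `e`. -/
def character (e c : Finset α) : ℤ := ∏ s ∈ c, symbolSign e s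

theorem abs_symbolSign (e : Finset α) (s : α) : |symbolSign e s| = 1 := by
  unfold symbolSign
  split_ifs <;> simp

theorem symbolSign_pow (e : Finset α) (s : α) (n : ℕ) :
    symbolSign e s ^ n = if Odd n then symbolSign e s else 1 := by
  unfold symbolSign
  split_ifs with hs hn hn
  · exact hn.neg_one_pow
  · exact (Nat.not_odd_iff_even.1 hn).neg_one_pow
  · exact one_pow n
  · exact one_pow n

theorem prod_symbolSign [Fintype α] (X : Finset (ι → α)) (k : ι) (e : Finset α) :
    ∏ v ∈ X, symbolSign e (v k) = character e (oddSymbols X k) := by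
  simp only [prod_apply_eq_prod_pow_card_fiber X k, symbolSign_pow, character, oddSymbols,
    prod_filter]

theorem one_add_prod_nonneg [Fintype ι] {f : ι → ℤ} (hf : ∀ k, |f k| = 1) :
    0 ≤ 1 + ∏ k, f k := by
  have habs : |∏ k, f k| = 1 := by simp [abs_prod, hf]
  linarith [neg_abs_le (∏ k, f k)]

/-- The symbol sets of even size; they stand for the characters of `𝔽₂^5` that are trivial on the
full symbol set. -/
def evenSets : Finset (Finset (Fin 5)) := {e | Even #e}

/-- The sign `(-1)^q(e)` of the quadratic form `q(e) = #e / 2` on even symbol sets. -/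
def quadSign (e : Finset (Fin 5)) : ℤ := (-1) ^ (#e / 2)

theorem sum_character : ∀ c : Finset (Fin 5),
    ∑ e ∈ evenSets, character e c = if c = ∅ ∨ c = univ then 16 else 0 := by
  decide +kernel

/-- The quadratic form has minus type, whence the negative Gauss sum `-4`. -/
theorem sum_quadSign_mul_character : ∀ c : Finset (Fin 5),
    ∑ e ∈ evenSets, quadSign e * character e c = -4 * (-1) ^ (#c / 2) := by
  decide +kernel

variable [Fintype ι]

/-- The product over `v ∈ P` of `1 + χ(v)`, where `χ` is the character attached to the family `e` of
symbol sets, one for each column. -/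
def rieszProduct (P : Finset (ι → Fin 5)) (e : ι → Finset (Fin 5)) : ℤ :=
  ∏ v ∈ P, (1 + ∏ k, symbolSign (e k) (v k))

variable (P : Finset (ι → Fin 5))

theorem rieszProduct_nonneg (e : ι → Finset (Fin 5)) : 0 ≤ rieszProduct P e :=
  prod_nonneg fun _ _ => one_add_prod_nonneg fun _ => abs_symbolSign _ _

theorem rieszProduct_eq_sum (e : ι → Finset (Fin 5)) :
    rieszProduct P e = ∑ X ∈ P.powerset, ∏ k, character (e k) (oddSymbols X k) := by
  rw [rieszProduct, prod_one_add]
  refine sum_congr rfl fun X _ => ?_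
  rw [prod_comm]
  exact prod_congr rfl fun k _ => prod_symbolSign X k (e k)

section PiFinset

variable [DecidableEq ι]

theorem sum_mul_rieszProduct (g : Finset (Fin 5) → ℤ) :
    ∑ e ∈ Fintype.piFinset fun _ : ι => evenSets, (∏ k, g (e k)) * rieszProduct P e
      = ∑ X ∈ P.powerset, ∏ k, ∑ e ∈ evenSets, g e * character e (oddSymbols X k) := by
  simp only [rieszProduct_eq_sum, mul_sum, ← prod_mul_distrib]
  rw [sum_comm]
  exact sum_congr rfl fun X _ => (prod_univ_sum _ fun k e => g e * character e _).symm

theorem sum_rieszProduct :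
    ∑ e ∈ Fintype.piFinset fun _ : ι => evenSets, rieszProduct P e = 16 ^ Fintype.card ι *
      #{X ∈ P.powerset | ∀ k, oddSymbols X k = ∅ ∨ oddSymbols X k = univ} := by
  have h := sum_mul_rieszProduct P fun _ => 1
  simp only [prod_const_one, one_mul, sum_character, Fintype.prod_ite_zero, prod_const,
    card_univ] at h
  rw [h, ← sum_filter, sum_const, nsmul_eq_mul, mul_comm]

variable {P}

theorem sum_quadSign_mul_rieszProduct (hι : Odd (Fintype.card ι))
    (hP : (P : Set (ι → Fin 5)).Pairwise fun u v => agreement u v = 1) :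
    ∑ e ∈ Fintype.piFinset fun _ : ι => evenSets, (∏ k, quadSign (e k)) * rieszProduct P e
      = -4 ^ Fintype.card ι * 2 ^ #P := by
  have hterm (X) (hX : X ∈ P.powerset) :
      ∏ k, ∑ e ∈ evenSets, quadSign e * character e (oddSymbols X k) = -4 ^ Fintype.card ι := by
    have heven := even_sum_card_oddSymbols_div_two hι (hP.mono (coe_subset.2 (mem_powerset.1 hX)))
    simp only [sum_quadSign_mul_character, prod_mul_distrib, prod_pow_eq_pow_sum,
      heven.neg_one_pow, prod_const, card_univ, hι.neg_pow, mul_one]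
  rw [sum_mul_rieszProduct, sum_congr rfl hterm, sum_const, card_powerset, nsmul_eq_mul, mul_comm]
  norm_cast

end PiFinset

variable {P} in
theorem two_pow_card_lt_four_pow_mul_card (hι : Odd (Fintype.card ι))
    (hP : (P : Set (ι → Fin 5)).Pairwise fun u v => agreement u v = 1) :
    2 ^ #P < 4 ^ Fintype.card ι *
      #{X ∈ P.powerset | ∀ k, oddSymbols X k = ∅ ∨ oddSymbols X k = univ} := by
  classical
  have hpos : 0 < ∑ e ∈ Fintype.piFinset fun _ : ι => evenSets,
      (1 + ∏ k, quadSign (e k)) * rieszProduct P e := by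
    refine sum_pos' (fun e _ => mul_nonneg (one_add_prod_nonneg fun k => ?_)
      (rieszProduct_nonneg P e)) ⟨fun _ => ∅, ?_, ?_⟩
    · simp [quadSign]
    · simp [evenSets]
    · simp [quadSign, rieszProduct, symbolSign]
  simp only [add_mul, one_mul, sum_add_distrib, sum_rieszProduct,
    sum_quadSign_mul_rieszProduct hι hP] at hpos
  rw [show (16 : ℤ) = 4 * 4 by norm_num, mul_pow, mul_assoc, neg_mul, ← sub_eq_add_neg, ← mul_sub]
    at hpos
  exact_mod_cast sub_pos.1 (pos_of_mul_pos_right hpos (by positivity))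

end EvenSubset

section Kirkman

/-- The words of length `n` over five symbols. -/
abbrev Word (n : ℕ) := Fin n → Fin 5

/-- Fifteen words of length seven, any two of which agree exactly once: a Kirkman triple system,
whose points are the words, whose days are the columns and whose triples are the fibers. -/
structure IsKirkman (P : Finset (Word 7)) : Prop where
  card_eq : #P = 15
  pairwise : (P : Set (Word 7)).Pairwise fun u v => agreement u v = 1

variable {P Y : Finset (Word 7)}

theorem IsKirkman.card_fiber (hP : IsKirkman P) (k : Fin 7) (s : Fin 5) : #(fiber P k s) = 3 := by
  have hsq := sum_sq_card_fiber_of_pairwise hP.pairwise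
  have hlin (k) : ∑ s, (#(fiber P k s) : ℤ) = #P := mod_cast sum_card_fiber P k
  have hzero : ∑ k, ∑ s, ((#(fiber P k s) : ℤ) - 3) ^ 2 = 0 := by
    calc ∑ k, ∑ s, ((#(fiber P k s) : ℤ) - 3) ^ 2
        = ∑ k, ∑ s, (#(fiber P k s) : ℤ) ^ 2 - 6 * ∑ k, ∑ s, (#(fiber P k s) : ℤ) + 7 * 5 * 9 := by
          simp only [sub_sq, sum_add_distrib, sum_sub_distrib, mul_sum]
          norm_num
          simp only [← mul_sum, ← sum_mul]
          ring
      _ = 0 := by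
          simp only [hsq, hlin, hP.card_eq]
          norm_num
  have hk := (sum_eq_zero_iff_of_nonneg fun k _ => sum_nonneg fun s _ => sq_nonneg _).1 hzero k
    (mem_univ k)
  have hs := (sum_eq_zero_iff_of_nonneg fun s _ => sq_nonneg _).1 hk s (mem_univ s)
  have := pow_eq_zero_iff two_ne_zero |>.1 hs
  omega

theorem IsKirkman.exists_even_subset (hP : IsKirkman P) :
    ∃ Y ⊆ P, Y.Nonempty ∧ ∀ k s, Even #(fiber Y k s) := by
  have hlt := two_pow_card_lt_four_pow_mul_card (by decide) hP.pairwise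
  rw [hP.card_eq, Fintype.card_fin] at hlt
  have hcard := Nat.lt_of_mul_lt_mul_left (a := 4 ^ 7) (b := 2) hlt
  obtain ⟨X, hX, hne⟩ := exists_mem_notMem_of_card_lt_card (card_le_two.trans_lt hcard)
    (s := {∅, P})
  simp only [mem_filter, mem_powerset, mem_insert, mem_singleton, not_or] at hX hne
  obtain ⟨hXP, hX⟩ := hX
  have hiff (k s) : Even #(fiber X k s) ↔ Even #X := even_card_fiber_iff (by decide) (hX k) s
  by_cases heven : Even #X
  · exact ⟨X, hXP, nonempty_iff_ne_empty.2 hne.1, fun k s => (hiff k s).2 heven⟩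
  · refine ⟨P \ X, sdiff_subset, sdiff_nonempty.2 fun h => hne.2 (hXP.antisymm h), fun k s => ?_⟩
    have hle := card_le_card (fiber_mono hXP (k := k) (s := s))
    rw [card_fiber_sdiff hXP, Nat.even_sub hle, hP.card_fiber, hiff]
    exact iff_of_false (by decide) heven

theorem IsKirkman.card_fiber_eq_zero_or_two (hP : IsKirkman P) (hY : Y ⊆ P)
    (heven : ∀ k s, Even #(fiber Y k s)) (k : Fin 7) (s : Fin 5) :
    #(fiber Y k s) = 0 ∨ #(fiber Y k s) = 2 := by
  have hle := card_le_card (fiber_mono hY (k := k) (s := s))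
  rw [hP.card_fiber] at hle
  obtain ⟨m, hm⟩ := heven k s
  omega

theorem IsKirkman.card_even_subset (hP : IsKirkman P) (hY : Y ⊆ P) (hne : Y.Nonempty)
    (heven : ∀ k s, Even #(fiber Y k s)) : #Y = 8 := by
  have hsq := sum_sq_card_fiber_of_pairwise (hP.pairwise.mono (coe_subset.2 hY))
  have htwo (k s) : (#(fiber Y k s) : ℤ) ^ 2 = 2 * #(fiber Y k s) := by
    rcases hP.card_fiber_eq_zero_or_two hY heven k s with h | h <;> rw [h] <;> norm_num
  have hlin (k) : ∑ s, (#(fiber Y k s) : ℤ) = #Y := mod_cast sum_card_fiber Y k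
  simp only [htwo, ← mul_sum, hlin, sum_const, card_univ, Fintype.card_fin, nsmul_eq_mul] at hsq
  have hpos : (#Y : ℤ) ≠ 0 := by exact_mod_cast hne.card_ne_zero
  have : (7 + #Y - 1 : ℤ) = 14 := mul_left_cancel₀ hpos (by push_cast at hsq; linarith)
  omega

end Kirkman

section Isometry

variable {ι κ α β : Type*} [Fintype ι] [DecidableEq α] {u v : ι → α} {k l : ι}

theorem agreement_eq_card_iff : agreement u v = Fintype.card ι ↔ u = v := by
  rw [← hammingDist_eq_zero, ← agreement_add_hammingDist u v]
  omega

theorem injective_of_agreement_eq [DecidableEq β] {e : (ι → α) → ι → β}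
    (he : ∀ u v, agreement (e u) (e v) = agreement u v) : Function.Injective e := fun u v h => by
  rw [← agreement_eq_card_iff, ← he, h, agreement_self]

theorem agreement_comp [Fintype κ] [DecidableEq β] (π : κ ≃ ι) (σ : κ → α ≃ β) (u v : ι → α) :
    agreement (fun a => σ a (u (π a))) (fun a => σ a (v (π a))) = agreement u v := by
  simp only [agreement, EmbeddingLike.apply_eq_iff_eq]
  exact card_equiv π (by simp)

theorem exists_apply_eq (h : agreement u v = 1) : ∃ k, u k = v k := by
  obtain ⟨k, hk⟩ := card_pos.1 (h ▸ one_pos : 0 < agreement u v)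
  exact ⟨k, (mem_filter.1 hk).2⟩

theorem eq_of_apply_eq (h : agreement u v = 1) (hk : u k = v k) (hl : u l = v l) : k = l :=
  card_le_one.1 h.le k (by simpa using hk) l (by simpa using hl)

end Isometry

section Steiner

/-- An idempotent commutative operation with `t p (t p q) = q`, that is, a Steiner triple system:
the product of two distinct points is the third point of the triple through them. -/
structure IsSteinerOp {α : Type*} (t : α → α → α) : Prop where
  idem : ∀ p, t p p = p
  comm : ∀ p q, t p q = t q p
  cancel : ∀ p q, t p (t p q) = q

/-- The lines of the Fano plane on the points `0, …, 6`. -/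
def fanoLine : Fin 7 → Fin 3 → Fin 7 :=
  ![![0, 1, 2], ![0, 3, 4], ![0, 5, 6], ![1, 3, 5], ![1, 4, 6], ![2, 3, 6], ![2, 4, 5]]

variable {α : Type*} [Fintype α] {t : α → α → α}

/-- Three points not on a line generate four others, leaving one value for every other product. -/
theorem IsSteinerOp.exists_equiv (ht : IsSteinerOp t) (hα : Fintype.card α = 7) (a : α) :
    ∃ f : Fin 7 ≃ α, f 0 = a ∧
      ∀ l, t (f (fanoLine l 0)) (f (fanoLine l 1)) = f (fanoLine l 2) := by
  classical
  obtain ⟨idem, comm, cancel⟩ := ht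
  obtain ⟨b, -, hb⟩ := exists_mem_notMem_of_card_lt_card (s := {a}) (t := univ) (by simp [hα])
  obtain ⟨c, hc⟩ : ∃ c, c = t a b := ⟨_, rfl⟩
  obtain ⟨d, -, hd⟩ := exists_mem_notMem_of_card_lt_card (s := {a, b, c}) (t := univ)
    (card_le_three.trans_lt (by simp [hα]))
  obtain ⟨e, he⟩ : ∃ e, e = t a d := ⟨_, rfl⟩
  obtain ⟨f, hf⟩ : ∃ f, f = t b d := ⟨_, rfl⟩
  obtain ⟨g, hg⟩ : ∃ g, g = t a f := ⟨_, rfl⟩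
  simp only [mem_insert, mem_singleton, not_or] at hb hd
  have hinj : Function.Injective ![a, b, c, d, e, f, g] := by
    rw [← List.nodup_ofFn]
    simp only [List.ofFn_succ, List.ofFn_zero, Matrix.cons_val_zero, Matrix.cons_val_succ,
      List.nodup_cons, List.mem_cons, List.not_mem_nil, or_false, not_or]
    grind (splits := 30)
  have hbij := (Fintype.bijective_iff_injective_and_card _).2 ⟨hinj, by simp [hα]⟩
  have hall (x) : x = a ∨ x = b ∨ x = c ∨ x = d ∨ x = e ∨ x = f ∨ x = g := by
    obtain ⟨i, rfl⟩ := hbij.2 x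
    fin_cases i <;> simp
  have hbe : t b e = g := by grind [hall (t b e)]
  have hcd : t c d = g := by grind [hall (t c d)]
  have hce : t c e = f := by grind [hall (t c e)]
  refine ⟨Equiv.ofBijective _ hbij, rfl, fun l => ?_⟩
  fin_cases l
  exacts [hc.symm, he.symm, hg.symm, hf.symm, hbe, hcd, hce]

end Steiner

section Fano

/-- Seven words of length seven in which any two agree exactly once and every column contains one
symbol three times and the others once: a Fano plane, whose lines are the triple fibers. -/
structure IsFano (F : Finset (Word 7)) : Prop where
  card_eq : #F = 7
  pairwise : (F : Set (Word 7)).Pairwise fun u v => agreement u v = 1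
  card_fiber : ∀ k s, #(fiber F k s) = 1 ∨ #(fiber F k s) = 3

/-- The words `u`, `v`, `w` share a symbol in some column. -/
def Collinear {n : ℕ} (u v w : Word n) : Prop := ∃ k, u k = v k ∧ u k = w k

variable {F : Finset (Word 7)} {u v w w' : Word 7}

theorem IsFano.eq_of_collinear (hF : IsFano F) (hu : u ∈ F) (hv : v ∈ F) (hw : w ∈ F)
    (hw' : w' ∈ F) (huv : u ≠ v) (hwu : w ≠ u) (hwv : w ≠ v) (hwu' : w' ≠ u) (hwv' : w' ≠ v)
    (h : Collinear u v w) (h' : Collinear u v w') : w = w' := by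
  obtain ⟨k, huk, hwk⟩ := h
  obtain ⟨l, hul, hwl⟩ := h'
  obtain rfl := eq_of_apply_eq (hF.pairwise hu hv huv) huk hul
  have hsub : {u, v, w} ⊆ fiber F k (u k) := by
    simp only [insert_subset_iff, singleton_subset_iff, mem_fiber]
    exact ⟨⟨hu, trivial⟩, ⟨hv, huk.symm⟩, hw, hwk.symm⟩
  have hcard : #{u, v, w} = 3 := card_eq_three.2 ⟨u, v, w, huv, hwu.symm, hwv.symm, rfl⟩
  have heq := eq_of_subset_of_card_le hsub (by rcases hF.card_fiber k (u k) with h | h <;> omega)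
  have hmem : w' ∈ fiber F k (u k) := mem_fiber.2 ⟨hw', hwl.symm⟩
  rw [← heq, mem_insert, mem_insert, mem_singleton] at hmem
  exact ((hmem.resolve_left hwu').resolve_left hwv').symm

theorem IsFano.exists_third (hF : IsFano F) (hu : u ∈ F) (hv : v ∈ F) (huv : u ≠ v) :
    ∃ w ∈ F, w ≠ u ∧ w ≠ v ∧ Collinear u v w := by
  obtain ⟨k, hk⟩ := exists_apply_eq (hF.pairwise hu hv huv)
  have hsub : {u, v} ⊆ fiber F k (u k) := by
    simp only [insert_subset_iff, singleton_subset_iff, mem_fiber]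
    exact ⟨⟨hu, trivial⟩, hv, hk.symm⟩
  have htwo := card_pair huv
  have hlt : #{u, v} < #(fiber F k (u k)) := by
    have := card_le_card hsub
    rcases hF.card_fiber k (u k) with h | h <;> omega
  obtain ⟨w, hw, hne⟩ := exists_mem_notMem_of_card_lt_card hlt
  simp only [mem_insert, mem_singleton, not_or] at hne
  exact ⟨w, (mem_fiber.1 hw).1, hne.1, hne.2, k, hk, (mem_fiber.1 hw).2.symm⟩

theorem IsFano.exists_steinerOp (hF : IsFano F) :
    ∃ t : F → F → F, IsSteinerOp t ∧ ∀ u v, Collinear u.1 v.1 (t u v).1 := by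
  have hex (u v : F) : ∃ w : F, Collinear u.1 v.1 w.1 ∧ (u = v → w = u) ∧
      (u ≠ v → w ≠ u ∧ w ≠ v) := by
    by_cases huv : u = v
    · exact ⟨u, ⟨0, by rw [huv], rfl⟩, fun _ => rfl, fun h => absurd huv h⟩
    · obtain ⟨w, hw, hwu, hwv, h⟩ := hF.exists_third u.2 v.2 (Subtype.coe_ne_coe.2 huv)
      exact ⟨⟨w, hw⟩, h, fun h => absurd h huv,
        fun _ => ⟨Subtype.coe_ne_coe.1 hwu, Subtype.coe_ne_coe.1 hwv⟩⟩
  choose t hcol hid hne using hex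
  have huniq {u v w : F} (huv : u ≠ v) (hwu : w ≠ u) (hwv : w ≠ v)
      (h : Collinear u.1 v.1 w.1) : t u v = w :=
    Subtype.ext <| hF.eq_of_collinear u.2 v.2 (t u v).2 w.2 (Subtype.coe_ne_coe.2 huv)
      (Subtype.coe_ne_coe.2 (hne u v huv).1) (Subtype.coe_ne_coe.2 (hne u v huv).2)
      (Subtype.coe_ne_coe.2 hwu) (Subtype.coe_ne_coe.2 hwv) (hcol u v) h
  refine ⟨t, ⟨fun u => hid u u rfl, fun u v => ?_, fun u v => ?_⟩, hcol⟩
  · rcases eq_or_ne u v with rfl | huv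
    · rfl
    obtain ⟨k, hk, hk'⟩ := hcol v u
    exact huniq huv (hne v u huv.symm).2 (hne v u huv.symm).1 ⟨k, hk.symm, hk.symm.trans hk'⟩
  · rcases eq_or_ne u v with rfl | huv
    · rw [hid u u rfl, hid u u rfl]
    obtain ⟨k, hk, hk'⟩ := hcol u v
    exact huniq (hne u v huv).1.symm huv.symm (hne u v huv).2.symm ⟨k, hk', hk⟩

/-- The Fano plane as seven words: in column `a`, the symbol `0` marks the points of
`fanoLine a` and the four other points carry the symbols `1, …, 4` in order. -/
def fanoWord : Fin 7 → Word 7 := ![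
  ![0, 0, 0, 1, 1, 1, 1],
  ![0, 1, 1, 0, 0, 2, 2],
  ![0, 2, 2, 2, 2, 0, 0],
  ![1, 0, 3, 0, 3, 0, 3],
  ![2, 0, 4, 3, 0, 3, 0],
  ![3, 3, 0, 0, 4, 4, 0],
  ![4, 4, 0, 4, 0, 0, 4]]

theorem eq_or_mem_fanoLine_of_fanoWord_eq : ∀ i j a, fanoWord i a = fanoWord j a →
    i = j ∨ ∃ x y, i = fanoLine a x ∧ j = fanoLine a y := by
  decide +kernel

theorem agreement_fanoWord : ∀ i j, i ≠ j → agreement (fanoWord i) (fanoWord j) = 1 := by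
  decide +kernel

theorem exists_fanoWord_apply_eq : ∀ a s, ∃ i, fanoWord i a = s := by decide +kernel

theorem fanoLine_inter : ∀ a b, ∃ x y, fanoLine a x = fanoLine b y := by decide +kernel

theorem three_lt_card_fanoLine_union : ∀ a b, a ≠ b →
    3 < #(univ.image (fanoLine a) ∪ univ.image (fanoLine b)) := by
  decide +kernel

theorem IsFano.exists_points_columns (hF : IsFano F) (hw : w ∈ F) :
    ∃ (f : Fin 7 ≃ F) (κ : Fin 7 → Fin 7), (f 0).1 = w ∧
      ∀ l x y, (f (fanoLine l x)).1 (κ l) = (f (fanoLine l y)).1 (κ l) := by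
  obtain ⟨t, ht, hcol⟩ := hF.exists_steinerOp
  obtain ⟨f, hf0, hf⟩ := ht.exists_equiv (by simp [hF.card_eq]) ⟨w, hw⟩
  choose κ h01 h02 using fun l => hf l ▸ hcol (f (fanoLine l 0)) (f (fanoLine l 1))
  have h0 (l x) : (f (fanoLine l 0)).1 (κ l) = (f (fanoLine l x)).1 (κ l) := by
    fin_cases x
    exacts [rfl, h01 l, h02 l]
  exact ⟨f, κ, congrArg Subtype.val hf0, fun l x y => (h0 l x).symm.trans (h0 l y)⟩

theorem IsFano.injective_columns (hF : IsFano F) (f : Fin 7 ≃ F) {κ : Fin 7 → Fin 7}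
    (hκ : ∀ l x y, (f (fanoLine l x)).1 (κ l) = (f (fanoLine l y)).1 (κ l)) :
    Function.Injective κ := by
  intro a b hab
  by_contra hne
  obtain ⟨x, y, hxy⟩ := fanoLine_inter a b
  let g : Fin 7 → Word 7 := fun i => (f i).1
  have hg : Function.Injective g := Subtype.val_injective.comp f.injective
  have hsub : (univ.image (fanoLine a) ∪ univ.image (fanoLine b)).image g
      ⊆ fiber F (κ a) (g (fanoLine a x) (κ a)) := by
    simp only [image_subset_iff, mem_union, mem_image, mem_univ, true_and]
    rintro i (⟨z, rfl⟩ | ⟨z, rfl⟩)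
    · exact mem_fiber.2 ⟨(f _).2, hκ a z x⟩
    · exact mem_fiber.2 ⟨(f _).2, by rw [hxy, hab]; exact hκ b z y⟩
  have hcard := card_le_card hsub
  rw [card_image_of_injective _ hg] at hcard
  have hlt := three_lt_card_fanoLine_union a b hne
  rcases hF.card_fiber (κ a) (g (fanoLine a x) (κ a)) with h | h <;> omega

theorem IsFano.exists_apply_eq_iff (hF : IsFano F) (hw : w ∈ F) :
    ∃ (f : Fin 7 → Word 7) (κ : Fin 7 ≃ Fin 7), f 0 = w ∧ univ.image f = F ∧
      ∀ i j a, f i (κ a) = f j (κ a) ↔ fanoWord i a = fanoWord j a := by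
  obtain ⟨f, κ, hf0, hκ⟩ := hF.exists_points_columns hw
  have hinj := hF.injective_columns f hκ
  have hag {i j a} (h : fanoWord i a = fanoWord j a) : (f i).1 (κ a) = (f j).1 (κ a) := by
    rcases eq_or_mem_fanoLine_of_fanoWord_eq i j a h with rfl | ⟨x, y, rfl, rfl⟩
    · rfl
    · exact hκ a x y
  refine ⟨fun i => (f i).1, Equiv.ofBijective κ (Finite.injective_iff_bijective.1 hinj), hf0, ?_,
    fun i j a => ⟨fun h => ?_, hag⟩⟩
  · ext u
    simp only [mem_image, mem_univ, true_and]
    exact ⟨fun ⟨i, hi⟩ => hi ▸ (f i).2, fun hu => ⟨f.symm ⟨u, hu⟩, by simp⟩⟩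
  · rcases eq_or_ne i j with rfl | hij
    · rfl
    obtain ⟨b, hb⟩ := exists_apply_eq (agreement_fanoWord i j hij)
    have hone := hF.pairwise (f i).2 (f j).2 (Subtype.coe_ne_coe.2 (f.injective.ne hij))
    rwa [hinj (eq_of_apply_eq hone h (hag hb))]

theorem exists_agreement_eq_of_apply_eq_iff {f : Fin 7 → Word 7} {κ : Fin 7 ≃ Fin 7}
    (hf : ∀ i j a, f i (κ a) = f j (κ a) ↔ fanoWord i a = fanoWord j a) :
    ∃ e : Word 7 → Word 7, (∀ u v, agreement (e u) (e v) = agreement u v) ∧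
      ∀ i, e (f i) = fanoWord i := by
  choose r hr using exists_fanoWord_apply_eq
  have hinj (a) : Function.Injective fun s => f (r a s) (κ a) := fun s s' h => by
    rw [← hr a s, (hf _ _ _).1 h, hr]
  let σ (a : Fin 7) : Fin 5 ≃ Fin 5 :=
    Equiv.ofBijective _ (Finite.injective_iff_bijective.1 (hinj a))
  refine ⟨fun u a => (σ a).symm (u (κ a)), agreement_comp κ fun a => (σ a).symm, fun i => ?_⟩
  funext a
  rw [Equiv.symm_apply_eq]
  exact (hf _ _ _).2 (hr a _).symm

theorem IsFano.exists_agreement_eq (hF : IsFano F) (hw : w ∈ F) :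
    ∃ e : Word 7 → Word 7, (∀ u v, agreement (e u) (e v) = agreement u v) ∧
      e w = fanoWord 0 ∧ F.image e = univ.image fanoWord := by
  obtain ⟨f, κ, rfl, rfl, hf⟩ := hF.exists_apply_eq_iff hw
  obtain ⟨e, he, hef⟩ := exists_agreement_eq_of_apply_eq_iff hf
  exact ⟨e, he, hef 0, by rw [image_image]; exact image_congr fun i _ => hef i⟩

end Fano

section Mask

/-- The position of a word among the words of its length, in base five with leading symbol first. -/
def index : (n : ℕ) → Word n → ℕ
  | 0, _ => 0
  | n + 1, u => 5 ^ n * u 0 + index n (Fin.tail u)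

/-- Sets of words are encoded as natural numbers, the words being the positions of the bits `1`. -/
def InMask {n : ℕ} (m : ℕ) (u : Word n) : Prop := m.testBit (index n u)

/-- The concatenation of `q` blocks of `w` bits. -/
def joinBlocks (w : ℕ) : (q : ℕ) → (Fin q → ℕ) → ℕ
  | 0, _ => 0
  | q + 1, f => 2 ^ w * joinBlocks w q (Fin.tail f) + f 0

/-- The block at position `s` in a concatenation of blocks of `w` bits. -/
def block (w m s : ℕ) : ℕ := m / 2 ^ (w * s) % 2 ^ w

/-- The set of all words that agree with `y` exactly `t` times. -/
def agreementMask : (n : ℕ) → Word n → ℕ → ℕ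
  | 0, _, 0 => 1
  | 0, _, _ + 1 => 0
  | n + 1, y, 0 => joinBlocks (5 ^ n) 5 fun s =>
      if s = y 0 then 0 else agreementMask n (Fin.tail y) 0
  | n + 1, y, t + 1 => joinBlocks (5 ^ n) 5 fun s =>
      agreementMask n (Fin.tail y) (if s = y 0 then t else t + 1)

/-- The list of the words in a set of words. -/
def members : (n : ℕ) → ℕ → List (Word n)
  | 0, m => if m = 0 then [] else [Fin.elim0]
  | n + 1, m => if m = 0 then [] else (List.finRange 5).flatMap fun s : Fin 5 =>
      (members n (block (5 ^ n) m s)).map (Fin.cons (α := fun _ => Fin 5) s)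

variable {n m m' : ℕ} {u y : Word n}

theorem index_lt (u : Word n) : index n u < 5 ^ n := by
  induction n with
  | zero => exact one_pos
  | succ n ih =>
    calc 5 ^ n * u 0 + index n (Fin.tail u) < 5 ^ n * u 0 + 5 ^ n := by gcongr; exact ih _
      _ = 5 ^ n * (u 0 + 1) := by ring
      _ ≤ 5 ^ (n + 1) := by rw [pow_succ]; gcongr; exact (u 0).isLt

theorem inMask_land : InMask (m &&& m') u ↔ InMask m u ∧ InMask m' u := by
  simp [InMask]

theorem inMask_lor : InMask (m ||| m') u ↔ InMask m u ∨ InMask m' u := by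
  simp [InMask]

theorem joinBlocks_testBit {w q i : ℕ} {f : Fin q → ℕ} (hf : ∀ s, f s < 2 ^ w) (s : Fin q)
    (hi : i < w) : (joinBlocks w q f).testBit (w * s + i) = (f s).testBit i := by
  induction q with
  | zero => exact s.elim0
  | succ q ih =>
    rw [joinBlocks, Nat.testBit_two_pow_mul_add _ (hf 0)]
    cases s using Fin.cases with
    | zero => simp [hi]
    | succ s =>
      rw [Fin.val_succ, mul_add_one, if_neg (by omega), show w * s + w + i - w = w * s + i by omega]
      exact ih (fun s => hf s.succ) s

theorem joinBlocks_lt {w q : ℕ} {f : Fin q → ℕ} (hf : ∀ s, f s < 2 ^ w) :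
    joinBlocks w q f < 2 ^ (w * q) := by
  induction q with
  | zero => exact Nat.two_pow_pos _
  | succ q ih =>
    calc 2 ^ w * joinBlocks w q (Fin.tail f) + f 0
        < 2 ^ w * (joinBlocks w q (Fin.tail f) + 1) := by rw [mul_add_one]; gcongr; exact hf 0
      _ ≤ 2 ^ w * 2 ^ (w * q) := by gcongr; exact ih fun s => hf s.succ
      _ = 2 ^ (w * (q + 1)) := by ring

theorem block_testBit {w s i : ℕ} (hi : i < w) :
    (block w m s).testBit i = m.testBit (w * s + i) := by
  simp [block, Nat.testBit_mod_two_pow, Nat.testBit_div_two_pow, hi, add_comm]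

theorem inMask_block {u : Word (n + 1)} :
    InMask (block (5 ^ n) m (u 0)) (Fin.tail u) ↔ InMask m u := by
  rw [InMask, block_testBit (index_lt _)]
  rfl

theorem mem_members (h : InMask m u) : u ∈ members n m := by
  have hm : m ≠ 0 := by
    rintro rfl
    simp [InMask] at h
  induction n generalizing m with
  | zero => simp [members, hm, eq_iff_true_of_subsingleton]
  | succ n ih =>
    rw [members, if_neg hm, List.mem_flatMap]
    have hb := inMask_block.2 h
    exact ⟨u 0, List.mem_finRange _, List.mem_map.2
      ⟨Fin.tail u, ih hb fun h0 => by simp [h0, InMask] at hb, Fin.cons_self_tail u⟩⟩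

theorem agreementMask_lt (y : Word n) (t : ℕ) : agreementMask n y t < 2 ^ 5 ^ n := by
  induction n generalizing t with
  | zero => cases t <;> simp [agreementMask]
  | succ n ih =>
    rw [pow_succ]
    cases t with
    | zero =>
      refine joinBlocks_lt fun s => ?_
      split_ifs
      exacts [Nat.two_pow_pos _, ih _ _]
    | succ t => exact joinBlocks_lt fun s => ih _ _

theorem agreement_succ (u v : Word (n + 1)) : agreement u v =
    (if u 0 = v 0 then 1 else 0) + agreement (Fin.tail u) (Fin.tail v) := by
  simp only [agreement, card_filter, Fin.sum_univ_succ]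
  rfl

theorem inMask_agreementMask {t : ℕ} : InMask (agreementMask n y t) u ↔ agreement u y = t := by
  induction n generalizing t with
  | zero => cases t <;> simp [InMask, agreementMask, index, agreement]
  | succ n ih =>
    rw [agreement_succ, InMask, index]
    have hi := index_lt (Fin.tail u)
    cases t with
    | zero =>
      rw [agreementMask, joinBlocks_testBit (fun s => ?_) _ hi]
      · split_ifs with h
        · simp
        · rw [zero_add]; exact ih
      · split_ifs
        exacts [Nat.two_pow_pos _, agreementMask_lt _ _]
    | succ t =>
      rw [agreementMask, joinBlocks_testBit (fun s => agreementMask_lt _ _) _ hi]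
      refine ih.trans ?_
      split_ifs <;> omega

theorem card_le_length_members {U : Finset (Word n)} (hU : ∀ u ∈ U, InMask m u) :
    #U ≤ (members n m).length :=
  (card_le_card fun _ hu => List.mem_toFinset.2 (mem_members (hU _ hu))).trans
    (List.toFinset_card_le _)

end Mask

section Search

/-- The set of all words that agree with `y` exactly once. -/
def onceMask (y : Word 7) : ℕ := agreementMask 7 y 1

/-- The set of all words that agree with `y` exactly zero or two times. -/
def zeroTwoMask (y : Word 7) : ℕ := agreementMask 7 y 0 ||| agreementMask 7 y 2

/-- The intersection of a list of sets of words. -/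
def inter (l : List ℕ) : ℕ := l.foldr (· &&& ·) (2 ^ 5 ^ 7 - 1)

/-- The words with first symbol `s` in a set of words. -/
def membersWith (s : Fin 5) (m : ℕ) : List (Word 7) :=
  (members 6 (block (5 ^ 6) m s)).map (Fin.cons (α := fun _ => Fin 5) s)

/-- The backtracking search that adds, for each symbol `s` of the list, two words of `c` with first
symbol `s` that agree only there, ordered by their second symbol. It updates the set `c` of the
words that may still be added and the set `z` of the words that agree zero or two times with each of
those added, and checks that `z` ends up with at most sixteen elements. -/
def search : List (Fin 5) → ℕ → ℕ → Bool
  | [], _, z => (members 7 z).length ≤ 16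
  | s :: l, c, z => (membersWith s c).all fun y => (membersWith s (c &&& onceMask y)).all fun y' =>
      y 1 ≤ y' 1 || search l (c &&& onceMask y &&& onceMask y')
        (z &&& zeroTwoMask y &&& zeroTwoMask y')

variable {m c z : ℕ} {s : Fin 5} {l : List (Fin 5)} {u y : Word 7} {U Y : Finset (Word 7)}

theorem inMask_onceMask : InMask (onceMask y) u ↔ agreement u y = 1 := inMask_agreementMask

theorem inMask_zeroTwoMask :
    InMask (zeroTwoMask y) u ↔ agreement u y = 0 ∨ agreement u y = 2 := by
  rw [zeroTwoMask, inMask_lor, inMask_agreementMask, inMask_agreementMask]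

theorem inMask_inter {l : List ℕ} (h : ∀ m ∈ l, InMask m u) : InMask (inter l) u := by
  induction l with
  | nil =>
    rw [InMask, inter, List.foldr_nil, Nat.testBit_two_pow_sub_one]
    exact decide_eq_true (index_lt u)
  | cons m l ih =>
    rw [List.forall_mem_cons] at h
    exact inMask_land.2 ⟨h.1, ih h.2⟩

theorem mem_membersWith (h : InMask m u) (hs : u 0 = s) : u ∈ membersWith s m :=
  hs ▸ List.mem_map.2 ⟨Fin.tail u, mem_members (inMask_block.2 h), Fin.cons_self_tail u⟩

theorem exists_fiber_eq_pair (hY : (Y : Set (Word 7)).Pairwise fun u v => agreement u v = 1)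
    (hs : #(fiber Y 0 s) = 2) :
    ∃ y ∈ Y, ∃ y' ∈ Y, y 0 = s ∧ y' 0 = s ∧ y ≠ y' ∧ y' 1 < y 1 := by
  obtain ⟨y, y', hne, hyy'⟩ := card_eq_two.1 hs
  obtain ⟨hy, hys⟩ := mem_fiber.1 (hyy' ▸ mem_insert_self y {y'})
  obtain ⟨hy', hys'⟩ := mem_fiber.1 (hyy' ▸ mem_insert_of_mem (mem_singleton_self y'))
  have h1 : y 1 ≠ y' 1 := fun h =>
    absurd (eq_of_apply_eq (hY hy hy' hne) (hys.trans hys'.symm) h) (by decide)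
  rcases h1.lt_or_gt with h | h
  · exact ⟨y', hy', y, hy, hys', hys, hne.symm, h⟩
  · exact ⟨y, hy, y', hy', hys, hys', hne, h⟩

theorem card_le_of_search (h : search l c z) (hl : l.Nodup)
    (hY : (Y : Set (Word 7)).Pairwise fun u v => agreement u v = 1)
    (hcard : ∀ s ∈ l, #(fiber Y 0 s) = 2) (hc : ∀ y ∈ Y, y 0 ∈ l → InMask c y)
    (hz : ∀ u ∈ U, InMask z u)
    (hU : ∀ u ∈ U, ∀ y ∈ Y, agreement u y = 0 ∨ agreement u y = 2) : #U ≤ 16 := by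
  induction l generalizing c z with
  | nil => exact (card_le_length_members hz).trans (of_decide_eq_true h)
  | cons s l ih =>
    rw [List.nodup_cons] at hl
    rw [List.forall_mem_cons] at hcard
    obtain ⟨y, hy, y', hy', hys, hys', hne, hlt⟩ := exists_fiber_eq_pair hY hcard.1
    have hyc : InMask c y := hc y hy (hys ▸ List.mem_cons_self)
    have hyc' : InMask (c &&& onceMask y) y' := inMask_land.2
      ⟨hc y' hy' (hys' ▸ List.mem_cons_self), inMask_onceMask.2 (hY hy' hy hne.symm)⟩
    have hnext := List.all_eq_true.1 (List.all_eq_true.1 h y (mem_membersWith hyc hys)) y'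
      (mem_membersWith hyc' hys')
    rw [Bool.or_eq_true, decide_eq_true_iff] at hnext
    refine ih (hnext.resolve_left hlt.not_ge) hl.2 hcard.2 (fun v hv hvl => ?_) fun u hu => ?_
    · have hvs : v 0 ≠ s := fun h => hl.1 (h ▸ hvl)
      simp only [inMask_land, inMask_onceMask]
      exact ⟨⟨hc v hv (List.mem_cons_of_mem _ hvl), hY hv hy fun h => hvs (h ▸ hys)⟩,
        hY hv hy' fun h => hvs (h ▸ hys')⟩
    · simp only [inMask_land, inMask_zeroTwoMask]
      exact ⟨⟨hz u hu, hU u hu y hy⟩, hU u hu y' hy'⟩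

theorem search_fanoWord : search [4, 3, 2, 1]
    (inter ((List.finRange 7).map (onceMask ∘ fanoWord)))
    (inter ((List.finRange 7).tail.map (zeroTwoMask ∘ fanoWord))) = true := by
  decide +kernel

end Search

section KirkmanComplement

variable {P Y U : Finset (Word 7)} {w : Word 7}

theorem IsKirkman.isFano_sdiff (hP : IsKirkman P) (hY : Y ⊆ P) (hne : Y.Nonempty)
    (heven : ∀ k s, Even #(fiber Y k s)) : IsFano (P \ Y) where
  card_eq := by rw [card_sdiff_of_subset hY, hP.card_eq, hP.card_even_subset hY hne heven]
  pairwise := hP.pairwise.mono (coe_subset.2 sdiff_subset)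
  card_fiber k s := by
    rw [card_fiber_sdiff hY, hP.card_fiber]
    have := hP.card_fiber_eq_zero_or_two hY heven k s
    omega

theorem IsKirkman.notMem_of_even_fiber (hP : IsKirkman P) (hY : Y ⊆ P)
    (heven : ∀ k s, Even #(fiber Y k s)) {u : Word 7}
    (hu : ∀ v ∈ P, v ≠ w → agreement u v = 0 ∨ agreement u v = 2) : w ∉ Y := by
  intro hw
  have hrest : Even (∑ v ∈ P \ Y, agreement u v) := even_sum _ fun v hv => by
    rw [mem_sdiff] at hv
    rcases hu v hv.1 fun h => hv.2 (h ▸ hw) with h | h <;> rw [h] <;> decide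
  have hsum : Even (∑ v ∈ Y, agreement u v) := by
    rw [sum_agreement]
    exact even_sum _ fun k _ => heven k _
  have htotal : ∑ v ∈ P, agreement u v = 21 := by
    rw [sum_agreement]
    simp [hP.card_fiber]
  rw [← sum_sdiff hY] at htotal
  exact absurd (htotal ▸ hrest.add hsum) (by decide)

theorem IsKirkman.image (hP : IsKirkman P) {e : Word 7 → Word 7}
    (he : ∀ u v, agreement (e u) (e v) = agreement u v) : IsKirkman (P.image e) where
  card_eq := by rw [card_image_of_injective _ (injective_of_agreement_eq he), hP.card_eq]
  pairwise := by
    rw [coe_image]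
    rintro _ ⟨u, hu, rfl⟩ _ ⟨v, hv, rfl⟩ huv
    exact (he u v).trans (hP.pairwise hu hv (ne_of_apply_ne e huv))

theorem IsKirkman.card_fiber_sdiff_fanoWord (hP : IsKirkman P) (hF : univ.image fanoWord ⊆ P)
    {s : Fin 5} (hs : s ≠ 0) : #(fiber (P \ univ.image fanoWord) 0 s) = 2 := by
  have hone : ∀ s ≠ 0, #(fiber (univ.image fanoWord) 0 s) = 1 := by decide +kernel
  rw [card_fiber_sdiff hF, hP.card_fiber, hone s hs]

theorem IsKirkman.card_le_sixteen_of_fanoWord (hP : IsKirkman P) (hF : univ.image fanoWord ⊆ P)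
    (hU : ∀ u ∈ U, ∀ v ∈ P, v ≠ fanoWord 0 → agreement u v = 0 ∨ agreement u v = 2) :
    #U ≤ 16 := by
  have hmem (i) : fanoWord i ∈ P := hF (mem_image_of_mem _ (mem_univ i))
  refine card_le_of_search search_fanoWord (by decide)
    (hP.pairwise.mono (coe_subset.2 sdiff_subset))
    (fun s hs => hP.card_fiber_sdiff_fanoWord hF (by rintro rfl; revert hs; decide))
    (fun y hy _ => inMask_inter ?_) (fun u hu => inMask_inter ?_) fun u hu y hy => ?_
  · simp only [List.forall_mem_map, Function.comp, inMask_onceMask]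
    intro i _
    rw [mem_sdiff] at hy
    exact hP.pairwise hy.1 (hmem i) fun h => hy.2 (h ▸ mem_image_of_mem _ (mem_univ i))
  · simp only [List.forall_mem_map, Function.comp, inMask_zeroTwoMask]
    intro i hi
    refine hU u hu _ (hmem i) fun h => ?_
    have : i ≠ 0 := by rintro rfl; revert hi; decide
    have := agreement_fanoWord i 0 this
    rw [h, agreement_self] at this
    exact absurd this (by decide)
  · rw [mem_sdiff] at hy
    exact hU u hu y hy.1 fun h => hy.2 (h ▸ mem_image_of_mem _ (mem_univ 0))

theorem IsKirkman.card_le_sixteen (hP : IsKirkman P) (hw : w ∈ P)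
    (hU : ∀ u ∈ U, ∀ v ∈ P, v ≠ w → agreement u v = 0 ∨ agreement u v = 2) : #U ≤ 16 := by
  rcases U.eq_empty_or_nonempty with rfl | ⟨u, hu⟩
  · exact Nat.zero_le _
  obtain ⟨Y, hY, hne, heven⟩ := hP.exists_even_subset
  obtain ⟨e, he, hew, hF⟩ := (hP.isFano_sdiff hY hne heven).exists_agreement_eq
    (mem_sdiff.2 ⟨hw, hP.notMem_of_even_fiber hY heven (hU u hu)⟩)
  rw [← card_image_of_injective U (injective_of_agreement_eq he)]
  have hsub : univ.image fanoWord ⊆ P.image e := hF ▸ image_subset_image sdiff_subset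
  refine (hP.image he).card_le_sixteen_of_fanoWord hsub ?_
  simp only [forall_mem_image, he, ← hew]
  exact fun u hu v hv hvw => hU u hu v hv (ne_of_apply_ne e hvw)

end KirkmanComplement

section PairCount

variable {ι α : Type*} [Fintype ι] [DecidableEq α]

/-- Any two words of `C` agree at most `d` times: a code of length `n` with minimum distance at
least `n - d`. -/
def AgreementLE (d : ℕ) (C : Finset (ι → α)) : Prop :=
  (C : Set (ι → α)).Pairwise fun u v => agreement u v ≤ d

theorem AgreementLE.mono {d : ℕ} {C D : Finset (ι → α)} (hC : AgreementLE d C) (h : D ⊆ C) :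
    AgreementLE d D :=
  Set.Pairwise.mono (coe_subset.2 h) hC

/-- The number of pairs of words in `X` and `Y` that agree exactly `t` times. -/
def pairCount (t : ℕ) (X Y : Finset (ι → α)) : ℕ :=
  ∑ u ∈ X, ∑ v ∈ Y, if agreement u v = t then 1 else 0

theorem pairCount_comm (t : ℕ) (X Y : Finset (ι → α)) : pairCount t X Y = pairCount t Y X := by
  rw [pairCount, sum_comm]
  simp only [agreement_comm, pairCount]

theorem pairCount_eq_zero_iff {t : ℕ} {X Y : Finset (ι → α)} :
    pairCount t X Y = 0 ↔ ∀ u ∈ X, ∀ v ∈ Y, agreement u v ≠ t := by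
  simp [pairCount]

end PairCount

section Slice

variable {α : Type*} [DecidableEq α] {n : ℕ} {C : Finset (Fin (n + 1) → α)} {j : Fin (n + 1)}
  {s : α} {v : Fin n → α}

theorem agreement_insertNth (j : Fin (n + 1)) (s t : α) (u v : Fin n → α) :
    agreement (Fin.insertNth (α := fun _ => α) j s u) (Fin.insertNth (α := fun _ => α) j t v) =
      (if s = t then 1 else 0) + agreement u v := by
  simp only [agreement, card_filter, Fin.sum_univ_succAbove _ j, Fin.insertNth_apply_same,
    Fin.insertNth_apply_succAbove]

variable [Fintype α]

/-- The words obtained by deleting column `j` from the words of `C` with symbol `s` there. -/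
def slice (C : Finset (Fin (n + 1) → α)) (j : Fin (n + 1)) (s : α) : Finset (Fin n → α) :=
  {v | Fin.insertNth (α := fun _ => α) j s v ∈ C}

theorem mem_slice : v ∈ slice C j s ↔ Fin.insertNth (α := fun _ => α) j s v ∈ C := by
  simp [slice]

theorem sum_slice {M : Type*} [AddCommMonoid M] (C : Finset (Fin (n + 1) → α)) (j : Fin (n + 1))
    (f : (Fin (n + 1) → α) → M) :
    ∑ s, ∑ v ∈ slice C j s, f (Fin.insertNth (α := fun _ => α) j s v) = ∑ u ∈ C, f u := by
  simp only [slice, sum_filter]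
  rw [← Fintype.sum_prod_type', ← Fintype.sum_ite_mem C]
  exact (Fin.insertNthEquiv (fun _ => α) j).sum_comp fun u => if u ∈ C then f u else 0

theorem sum_card_slice (C : Finset (Fin (n + 1) → α)) (j : Fin (n + 1)) :
    ∑ s, #(slice C j s) = #C := by
  simpa only [card_eq_sum_ones] using sum_slice C j fun _ => 1

theorem agreementLE_slice {d : ℕ} (hC : AgreementLE (d + 1) C) (j : Fin (n + 1)) (s : α) :
    AgreementLE d (slice C j s) := by
  intro u hu v hv huv
  have : agreement _ _ ≤ d + 1 := hC (mem_slice.1 hu) (mem_slice.1 hv)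
    fun h => huv (Fin.insertNth_inj.1 h).2
  rw [agreement_insertNth, if_pos rfl] at this
  omega

theorem AgreementLE.agreement_le_of_mem_slice {d : ℕ} (hC : AgreementLE d C) (j : Fin (n + 1))
    {s t : α} (hst : s ≠ t) (u : Fin n → α) (hu : u ∈ slice C j s) (v : Fin n → α)
    (hv : v ∈ slice C j t) : agreement u v ≤ d := by
  have : agreement _ _ ≤ d := hC (mem_slice.1 hu) (mem_slice.1 hv)
    fun h => hst (Fin.insertNth_inj.1 h).1
  rwa [agreement_insertNth, if_neg hst, zero_add] at this

theorem AgreementLE.pairwise_disjoint_slice {d : ℕ} (hC : AgreementLE d C) (hd : d < n)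
    (j : Fin (n + 1)) : Pairwise (Function.onFun Disjoint (slice C j)) := fun s t hst =>
  disjoint_left.2 fun u hus hut => by
    have := hC.agreement_le_of_mem_slice j hst u hus u hut
    rw [agreement_self, Fintype.card_fin] at this
    omega

theorem card_fiber_slice (C : Finset (Fin (n + 1) → α)) (j : Fin (n + 1)) (s : α) (i : Fin n)
    (t : α) : #(fiber (slice C j s) i t) = #{u ∈ C | u j = s ∧ u (j.succAbove i) = t} := by
  rw [card_filter, ← sum_slice C j, fiber, card_filter]
  simp only [Fin.insertNth_apply_same, Fin.insertNth_apply_succAbove, ite_and]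
  rw [sum_eq_single s (fun r _ hr => by simp [hr]) (by simp)]
  simp

theorem pairCount_one_self (C : Finset (Fin (n + 1) → α)) (j : Fin (n + 1)) :
    pairCount 1 C C = ∑ s, pairCount 0 (slice C j s) (slice C j s) +
      ∑ s, ∑ t ∈ univ.erase s, pairCount 1 (slice C j t) (slice C j s) := by
  calc pairCount 1 C C
      = ∑ s, ∑ t, ∑ u ∈ slice C j s, ∑ v ∈ slice C j t,
          if (if s = t then 1 else 0) + agreement u v = 1 then 1 else 0 := by
        simp only [pairCount, ← sum_slice C j, agreement_insertNth]
        exact sum_congr rfl fun s _ => sum_comm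
    _ = ∑ s, (pairCount 0 (slice C j s) (slice C j s) +
          ∑ t ∈ univ.erase s, pairCount 1 (slice C j t) (slice C j s)) := by
        refine sum_congr rfl fun s _ => ?_
        rw [← add_sum_erase _ _ (mem_univ s)]
        congr 1
        · simp [pairCount]
        · refine sum_congr rfl fun t ht => ?_
          simp only [if_neg (ne_of_mem_erase ht).symm, zero_add]
          exact pairCount_comm ..
    _ = _ := sum_add_distrib

theorem sum_pairCount_slice (C : Finset (Fin (n + 1) → α)) :
    ∑ j, ∑ s, pairCount 0 (slice C j s) (slice C j s) = pairCount 1 C C := by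
  have hslice (j : Fin (n + 1)) : ∑ s, pairCount 0 (slice C j s) (slice C j s) =
      ∑ u ∈ C, ∑ v ∈ C, if u j = v j ∧ agreement u v = 1 then 1 else 0 := by
    simp only [← sum_slice C j, pairCount, agreement_insertNth, Fin.insertNth_apply_same, ite_and]
    refine sum_congr rfl fun s _ => sum_congr rfl fun u _ => ?_
    rw [sum_eq_single s (fun t _ ht => by simp [ht.symm]) (by simp)]
    simp
  simp only [hslice]
  rw [sum_comm, pairCount]
  refine sum_congr rfl fun u _ => ?_
  rw [sum_comm]
  refine sum_congr rfl fun v _ => ?_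
  simp only [and_comm (b := agreement u v = 1), ite_and]
  split_ifs with h
  · rw [← card_filter]
    exact h
  · exact sum_const_zero

end Slice

section Deficiency

variable {B : Finset (Word 7)} {i : Fin 7}

theorem sum_sum_card_fiber (B : Finset (Word 7)) : ∑ i, ∑ t, (#(fiber B i t) : ℤ) = 7 * #B := by
  have hi (i) : ∑ t, (#(fiber B i t) : ℤ) = #B := mod_cast sum_card_fiber B i
  simp [hi]

theorem pairCount_zero_add_sum_sq (hB : AgreementLE 1 B) :
    (pairCount 0 B B : ℤ) + ∑ i, ∑ t, (#(fiber B i t) : ℤ) ^ 2 = (#B : ℤ) ^ 2 + 6 * #B := by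
  have hpair (u) (hu : u ∈ B) (v) (hv : v ∈ B) :
      (if agreement u v = 0 then 1 else 0) + agreement u v = 1 + if u = v then 6 else 0 := by
    split_ifs with h0 h h
    · rw [h, agreement_self] at h0
      cases h0
    · rw [h0]
    · rw [h, agreement_self, Fintype.card_fin]
    · have : agreement u v ≤ 1 := hB hu hv h
      omega
  have hsum : pairCount 0 B B + ∑ i, ∑ t, #(fiber B i t) ^ 2 = #B ^ 2 + 6 * #B := by
    rw [sum_sq_card_fiber, pairCount, ← sum_add_distrib]
    simp only [← sum_add_distrib]
    rw [sum_congr rfl fun u hu => sum_congr rfl (hpair u hu)]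
    simp [sum_add_distrib, sq, mul_comm]
  exact_mod_cast hsum

theorem card_le_fifteen (hB : AgreementLE 1 B) : #B ≤ 15 := by
  have hcolumn (i) : (#B : ℤ) ^ 2 ≤ 5 * ∑ t, (#(fiber B i t) : ℤ) ^ 2 := by
    have hi : ∑ t, (#(fiber B i t) : ℤ) = #B := mod_cast sum_card_fiber B i
    simpa [hi] using sq_sum_le_card_mul_sum_sq (s := univ) (f := fun t => (#(fiber B i t) : ℤ))
  have hsum := sum_le_sum fun i (_ : i ∈ univ) => hcolumn i
  have hpairs := pairCount_zero_add_sum_sq hB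
  rw [← mul_sum] at hsum
  simp only [sum_const, card_univ, Fintype.card_fin, nsmul_eq_mul] at hsum
  push_cast at hsum
  by_contra! h
  have : (16 : ℤ) ≤ #B := by exact_mod_cast h
  nlinarith

/-- The number of words by which a code of length seven misses the size of a Kirkman system. -/
def deficiency (B : Finset (Word 7)) : ℕ := 15 - #B

/-- The number of words by which a fiber misses the size three of those of a Kirkman system; it may
be negative. -/
def fiberDeficiency (B : Finset (Word 7)) (i : Fin 7) (t : Fin 5) : ℤ := 3 - #(fiber B i t)

theorem card_add_deficiency (hB : AgreementLE 1 B) : #B + deficiency B = 15 :=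
  Nat.add_sub_cancel' (card_le_fifteen hB)

theorem sum_fiberDeficiency (hB : AgreementLE 1 B) (i : Fin 7) :
    ∑ t, fiberDeficiency B i t = deficiency B := by
  have hi : ∑ t, (#(fiber B i t) : ℤ) = #B := mod_cast sum_card_fiber B i
  have := card_add_deficiency hB
  simp only [fiberDeficiency, sum_sub_distrib, hi]
  simp
  omega

theorem pairCount_zero_add_sum_sq_fiberDeficiency (hB : AgreementLE 1 B) :
    (pairCount 0 B B : ℤ) + ∑ i, ∑ t, fiberDeficiency B i t ^ 2 =
      (deficiency B : ℤ) ^ 2 + 6 * deficiency B := by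
  have hcard : (#B : ℤ) = 15 - deficiency B := by
    have := card_add_deficiency hB
    omega
  have hsq : ∑ i, ∑ t, fiberDeficiency B i t ^ 2 =
      ∑ i, ∑ t, (#(fiber B i t) : ℤ) ^ 2 - 6 * ∑ i, ∑ t, (#(fiber B i t) : ℤ) + 315 := by
    simp only [fiberDeficiency, mul_sum, ← sum_sub_distrib]
    rw [show (315 : ℤ) = ∑ i : Fin 7, ∑ t : Fin 5, 9 by simp, ← sum_add_distrib]
    simp only [← sum_add_distrib]
    exact sum_congr rfl fun i _ => sum_congr rfl fun t _ => by ring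
  have hpairs := pairCount_zero_add_sum_sq hB
  rw [sum_sum_card_fiber] at hsq
  rw [hcard] at hpairs hsq
  linarith

theorem deficiency_le_sum_sq_fiberDeficiency (hB : AgreementLE 1 B) (i : Fin 7) :
    (deficiency B : ℤ) ≤ ∑ t, fiberDeficiency B i t ^ 2 := by
  rw [← sum_fiberDeficiency hB i]
  exact sum_le_sum fun t _ => Int.le_self_sq _

theorem pairCount_zero_add_deficiency_le (hB : AgreementLE 1 B) :
    pairCount 0 B B + deficiency B ≤ deficiency B ^ 2 := by
  have hpairs := pairCount_zero_add_sum_sq_fiberDeficiency hB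
  have hsum := sum_le_sum fun i (_ : i ∈ univ) => deficiency_le_sum_sq_fiberDeficiency hB i
  simp only [sum_const, card_univ, Fintype.card_fin, nsmul_eq_mul] at hsum
  zify
  push_cast at hsum
  linarith

theorem pairCount_zero_add_fifteen_mul_le (hB : AgreementLE 1 B) :
    pairCount 0 B B + 15 * deficiency B ≤ deficiency B ^ 2 + 70 := by
  have hpairs := pairCount_zero_add_sum_sq_fiberDeficiency hB
  have hpoint (x : ℤ) : 3 * x - 2 ≤ x ^ 2 := by
    rcases le_or_gt x 1 with h | h <;> nlinarith
  have hcolumn (i) : 3 * (deficiency B : ℤ) - 10 ≤ ∑ t, fiberDeficiency B i t ^ 2 := by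
    rw [← sum_fiberDeficiency hB i, mul_sum, show (10 : ℤ) = ∑ t : Fin 5, 2 by simp,
      ← sum_sub_distrib]
    exact sum_le_sum fun t _ => hpoint _
  have hsum := sum_le_sum fun i (_ : i ∈ univ) => hcolumn i
  simp only [sum_const, card_univ, Fintype.card_fin, nsmul_eq_mul] at hsum
  zify
  push_cast at hsum
  linarith

/-- When the deficiency is concentrated on two fibers of column `i`, Cauchy–Schwarz improves the
bound for that column. -/
theorem two_mul_pairCount_zero_le (hB : AgreementLE 1 B) {T : Finset (Fin 5)} (hT : #T ≤ 2)
    (hi : ∀ t ∉ T, fiberDeficiency B i t = 0) : 2 * pairCount 0 B B ≤ deficiency B ^ 2 := by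
  have hpairs := pairCount_zero_add_sum_sq_fiberDeficiency hB
  have hsplit {f : Fin 5 → ℤ} (hf : ∀ t ∉ T, f t = 0) : ∑ t, f t = ∑ t ∈ T, f t :=
    (sum_subset (subset_univ T) fun t _ ht => hf t ht).symm
  have hcolumn : (deficiency B : ℤ) ^ 2 ≤ 2 * ∑ t, fiberDeficiency B i t ^ 2 := by
    rw [← sum_fiberDeficiency hB i, hsplit hi, hsplit fun t ht => by rw [hi t ht]; rfl]
    calc _ ≤ #T * ∑ t ∈ T, fiberDeficiency B i t ^ 2 := sq_sum_le_card_mul_sum_sq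
      _ ≤ _ := mul_le_mul_of_nonneg_right (mod_cast hT) (sum_nonneg fun t _ => sq_nonneg _)
  have hsum := sum_le_sum fun k (_ : k ∈ univ.erase i) => deficiency_le_sum_sq_fiberDeficiency hB k
  rw [← add_sum_erase _ _ (mem_univ i)] at hpairs
  simp only [sum_const, card_erase_of_mem (mem_univ i), card_univ, Fintype.card_fin,
    nsmul_eq_mul] at hsum
  zify
  push_cast at hsum
  linarith

end Deficiency

section Completion

variable {B U : Finset (Word 7)} {u : Word 7}

theorem exists_eq_ite_of_sum_eq_one {α : Type*} [Fintype α] [DecidableEq α] {x : α → ℤ}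
    (hx : ∑ t, x t = 1) (hsq : ∑ t, x t ^ 2 = 1) : ∃ r, ∀ t, x t = if r = t then 1 else 0 := by
  have hzero : ∑ t, (x t ^ 2 - x t) = 0 := by rw [sum_sub_distrib, hsq, hx, sub_self]
  have h01 (t) : x t = if x t = 1 then 1 else 0 := by
    have h := (sum_eq_zero_iff_of_nonneg fun t _ => sub_nonneg.2 (Int.le_self_sq (x t))).1 hzero t
      (mem_univ t)
    have h : x t * (x t - 1) = 0 := by linarith
    split_ifs with h1
    · exact h1
    · exact (mul_eq_zero.1 h).resolve_right fun h => h1 (sub_eq_zero.1 h)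
  have hcard : #{t | x t = 1} = 1 := by
    rw [sum_congr rfl fun t _ => h01 t, sum_boole] at hx
    exact_mod_cast hx
  obtain ⟨r, hr⟩ := card_eq_one.1 hcard
  refine ⟨r, fun t => ?_⟩
  rw [h01 t]
  have := Finset.ext_iff.1 hr t
  simp only [mem_filter, mem_univ, true_and, mem_singleton] at this
  simp only [this, eq_comm]

theorem pairCount_zero_eq_zero (hB : AgreementLE 1 B) (hdef : deficiency B ≤ 1) :
    pairCount 0 B B = 0 := by
  have := pairCount_zero_add_deficiency_le hB
  have : deficiency B ^ 2 ≤ deficiency B := by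
    rw [sq]
    exact mul_le_of_le_one_left (Nat.zero_le _) hdef
  omega

theorem pairwise_agreement_eq_one (hB : AgreementLE 1 B) (hdef : deficiency B ≤ 1) :
    (B : Set (Word 7)).Pairwise fun u v => agreement u v = 1 := fun u hu v hv huv => by
  have hne := pairCount_eq_zero_iff.1 (pairCount_zero_eq_zero hB hdef) u hu v hv
  have : agreement u v ≤ 1 := hB hu hv huv
  omega

theorem isKirkman_of_deficiency_eq_zero (hB : AgreementLE 1 B) (hdef : deficiency B = 0) :
    IsKirkman B where
  card_eq := by rw [← card_add_deficiency hB, hdef, add_zero]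
  pairwise := pairwise_agreement_eq_one hB (hdef.le.trans zero_le_one)

theorem exists_fiberDeficiency_eq_ite (hB : AgreementLE 1 B) (hdef : deficiency B = 1) :
    ∃ w : Word 7, ∀ i t, fiberDeficiency B i t = if w i = t then 1 else 0 := by
  have hpairs := pairCount_zero_add_sum_sq_fiberDeficiency hB
  rw [pairCount_zero_eq_zero hB hdef.le, hdef] at hpairs
  have hle (i) : 1 ≤ ∑ t, fiberDeficiency B i t ^ 2 := by
    simpa [hdef] using deficiency_le_sum_sq_fiberDeficiency hB i
  have hone (i) : ∑ t, fiberDeficiency B i t ^ 2 = 1 := by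
    refine ((sum_eq_sum_iff_of_le fun i _ => hle i).1 ?_ i (mem_univ i)).symm
    simpa using hpairs.symm
  have hsum (i) : ∑ t, fiberDeficiency B i t = 1 := by rw [sum_fiberDeficiency hB, hdef]; rfl
  choose w hw using fun i => exists_eq_ite_of_sum_eq_one (hsum i) (hone i)
  exact ⟨w, hw⟩

theorem exists_isKirkman_insert (hB : AgreementLE 1 B) (hdef : deficiency B = 1) :
    ∃ w, IsKirkman (insert w B) := by
  obtain ⟨w, hw⟩ := exists_fiberDeficiency_eq_ite hB hdef
  have hcard : #B = 14 := by
    have := card_add_deficiency hB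
    omega
  have hB1 := pairwise_agreement_eq_one hB hdef.le
  have hagree (v) (hv : v ∈ B) : agreement w v = 1 := by
    have htotal : ∑ u ∈ B, agreement v u = 20 := by
      rw [← add_sum_erase _ _ hv, agreement_self, sum_congr rfl fun u hu =>
        hB1 hv (mem_of_mem_erase hu) (ne_of_mem_erase hu).symm]
      simp [card_erase_of_mem hv, hcard]
    have hdefect : ∑ i, fiberDeficiency B i (v i) = agreement w v := by
      simp [hw, agreement]
    simp only [fiberDeficiency, sum_sub_distrib] at hdefect
    rw [sum_agreement] at htotal
    zify at htotal
    rw [htotal] at hdefect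
    simp at hdefect
    omega
  have hwB : w ∉ B := fun h => absurd (hagree w h) (by simp [agreement_self])
  refine ⟨w, by rw [card_insert_of_notMem hwB, hcard], ?_⟩
  rw [coe_insert, Set.pairwise_insert]
  exact ⟨hB1, fun v hv _ => ⟨hagree v hv, agreement_comm v w ▸ hagree v hv⟩⟩

theorem IsKirkman.exists_agreement_eq_one (hB : IsKirkman B) (hu : ∀ v ∈ B, agreement u v ≤ 2) :
    ∃ v ∈ B, agreement u v = 1 := by
  by_contra! hne
  have heven : Even (∑ v ∈ B, agreement u v) := even_sum _ fun v hv => by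
    have := hu v hv
    have := hne v hv
    interval_cases agreement u v <;> first | contradiction | decide
  rw [sum_agreement] at heven
  simp only [hB.card_fiber] at heven
  exact absurd heven (by decide)

theorem card_filter_forall_agreement_ne_one (hB : AgreementLE 1 B) (hdef : deficiency B ≤ 1)
    (hU : ∀ u ∈ U, ∀ v ∈ B, agreement u v ≤ 2) :
    #{u ∈ U | ∀ v ∈ B, agreement u v ≠ 1} ≤ 16 * deficiency B := by
  obtain h0 | h1 : deficiency B = 0 ∨ deficiency B = 1 := by omega
  · rw [h0, mul_zero, Nat.le_zero, card_eq_zero, filter_eq_empty_iff]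
    intro u hu hne
    obtain ⟨v, hv, h⟩ := (isKirkman_of_deficiency_eq_zero hB h0).exists_agreement_eq_one (hU u hu)
    exact hne v hv h
  · obtain ⟨w, hw⟩ := exists_isKirkman_insert hB h1
    rw [h1]
    refine hw.card_le_sixteen (mem_insert_self w B) fun u hu v hv hvw => ?_
    obtain ⟨hu, hne⟩ := mem_filter.1 hu
    have hv := mem_of_mem_insert_of_ne hv hvw
    have := hU u hu v hv
    have := hne v hv
    omega

theorem card_le_pairCount_add (hB : AgreementLE 1 B) (hdef : deficiency B ≤ 1)
    (hU : ∀ u ∈ U, ∀ v ∈ B, agreement u v ≤ 2) :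
    #U ≤ pairCount 1 U B + 16 * deficiency B := by
  refine le_trans ?_ (Nat.add_le_add_left (card_filter_forall_agreement_ne_one hB hdef hU) _)
  rw [card_eq_sum_ones, card_filter, pairCount, ← sum_add_distrib]
  refine sum_le_sum fun u _ => ?_
  split_ifs with h
  · exact Nat.le_add_left ..
  · push Not at h
    obtain ⟨v, hv, h⟩ := h
    rw [add_zero, ← card_filter]
    exact card_pos.2 ⟨v, mem_filter.2 ⟨hv, h⟩⟩

end Completion

section Counting

variable {C : Finset (Word 8)} {j : Fin 8}

theorem sum_deficiency (hC : AgreementLE 2 C) (hcard : #C = 66) (j : Fin 8) :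
    ∑ s, deficiency (slice C j s) = 9 := by
  have h : ∑ s, (#(slice C j s) + deficiency (slice C j s)) = 75 := by
    simp [card_add_deficiency (agreementLE_slice hC j _)]
  rw [sum_add_distrib, sum_card_slice, hcard] at h
  omega

/-- An upper bound for the number of pairs without agreement in a code of length seven and
deficiency `a`. -/
def pairBound (a : ℕ) : ℕ := min (a ^ 2 - a) (a ^ 2 + 70 - 15 * a)

theorem pairCount_zero_le_pairBound {B : Finset (Word 7)} (hB : AgreementLE 1 B) :
    pairCount 0 B B ≤ pairBound (deficiency B) := by
  have := pairCount_zero_add_deficiency_le hB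
  have := pairCount_zero_add_fifteen_mul_le hB
  exact le_min (by omega) (by omega)

/-- The share of slice `s` in a lower bound for the number of pairs of words from different slices
that agree once, where `a` lists the deficiencies of the five slices of 66 words. If `a s ≤ 1`, all
but `16 * a s` words outside slice `s` occur in such a pair with a word of slice `s`: the first
summand applies this to all `51 + a s` of them, the second one to those in slices of deficiency at
least two, to count the pairs starting there. -/
def crossBound (a : Fin 5 → ℕ) (s : Fin 5) : ℕ :=
  if a s ≤ 1 then (51 - 15 * a s) + (∑ t with 2 ≤ a t, (15 - a t) - 16 * a s) else 0

theorem seven_mul_sum_pairBound_lt_or {a : Fin 5 → ℕ} (ha : ∑ s, a s = 9) :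
    7 * ∑ s, pairBound (a s) < ∑ s, crossBound a s ∨ 3 ≤ #{s | a s = 0} := by
  revert a
  simp only [← Finset.Nat.mem_antidiagonalTuple]
  decide +kernel

theorem sum_min_pairBound_le {a : Fin 5 → ℕ} (ha : ∑ s, a s = 9) :
    ∑ s, min (pairBound (a s)) (a s ^ 2 / 2) ≤ 20 := by
  revert a
  simp only [← Finset.Nat.mem_antidiagonalTuple]
  decide +kernel

theorem le_sum_crossBound {a : Fin 5 → ℕ} (ha : ∑ s, a s = 9) (hzero : 3 ≤ #{s | a s = 0}) :
    153 ≤ ∑ s, crossBound a s := by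
  revert a
  simp only [← Finset.Nat.mem_antidiagonalTuple]
  decide +kernel

theorem sum_card_slice_le_sum_pairCount_add (hC : AgreementLE 2 C) {s : Fin 5}
    (hs : deficiency (slice C j s) ≤ 1) {T : Finset (Fin 5)} (hsT : s ∉ T) :
    ∑ t ∈ T, #(slice C j t) ≤
      ∑ t ∈ T, pairCount 1 (slice C j t) (slice C j s) + 16 * deficiency (slice C j s) := by
  have hdisj := (hC.pairwise_disjoint_slice (by decide) j).set_pairwise (T : Set (Fin 5))
  have hU (u) (hu : u ∈ T.biUnion (slice C j)) (v) (hv : v ∈ slice C j s) :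
      agreement u v ≤ 2 := by
    obtain ⟨t, ht, hut⟩ := mem_biUnion.1 hu
    exact hC.agreement_le_of_mem_slice j (ne_of_mem_of_not_mem ht hsT) u hut v hv
  rw [← card_biUnion hdisj]
  simp only [pairCount]
  rw [← sum_biUnion hdisj]
  exact card_le_pairCount_add (agreementLE_slice hC j s) hs hU

theorem sum_sum_erase_add_sum_compl_le {ι : Type*} [Fintype ι] [DecidableEq ι] {p : ι → ι → ℕ}
    (hp : ∀ t s, p t s = p s t) (S : Finset ι) :
    ∑ s ∈ S, (∑ t ∈ univ.erase s, p t s + ∑ t ∈ Sᶜ, p t s) ≤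
      ∑ s, ∑ t ∈ univ.erase s, p t s := by
  have hrow (t) (ht : t ∈ Sᶜ) : ∑ s ∈ S, p t s ≤ ∑ s ∈ univ.erase t, p s t := by
    simp only [hp t]
    exact sum_le_sum_of_subset fun s hs =>
      mem_erase.2 ⟨ne_of_mem_of_not_mem hs (mem_compl.1 ht), mem_univ s⟩
  rw [sum_add_distrib, sum_comm (s := S), ← sum_add_sum_compl S]
  exact Nat.add_le_add_left (sum_le_sum hrow) _

theorem sum_crossBound_le (hC : AgreementLE 2 C) (hcard : #C = 66) (j : Fin 8) :
    ∑ s, crossBound (fun t => deficiency (slice C j t)) s ≤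
      ∑ s, ∑ t ∈ univ.erase s, pairCount 1 (slice C j t) (slice C j s) := by
  have hsize (t) : #(slice C j t) = 15 - deficiency (slice C j t) := by
    have := card_add_deficiency (agreementLE_slice hC j t)
    omega
  set a := fun t => deficiency (slice C j t) with ha
  set p := fun t s => pairCount 1 (slice C j t) (slice C j s) with hp
  have hsmall (s) (hs : a s ≤ 1) : 51 - 15 * a s ≤ ∑ t ∈ univ.erase s, p t s := by
    have h := sum_card_slice_le_sum_pairCount_add hC hs (notMem_erase s univ)
    have htotal := sum_card_slice C j
    rw [← add_sum_erase _ _ (mem_univ s), hcard, hsize s] at htotal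
    simp only [ha, hp] at hs h ⊢
    omega
  have hbig (s) (hs : a s ≤ 1) : ∑ t with 2 ≤ a t, (15 - a t) - 16 * a s ≤
      ∑ t with 2 ≤ a t, p t s := by
    have h := sum_card_slice_le_sum_pairCount_add hC hs (T := {t | 2 ≤ a t}) (by simp; omega)
    simp only [hsize] at h
    exact Nat.sub_le_iff_le_add.2 h
  calc ∑ s, crossBound a s
      = ∑ s with a s ≤ 1, ((51 - 15 * a s) + (∑ t with 2 ≤ a t, (15 - a t) - 16 * a s)) := by
        rw [sum_filter]
        rfl
    _ ≤ ∑ s with a s ≤ 1, (∑ t ∈ univ.erase s, p t s + ∑ t with 2 ≤ a t, p t s) :=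
        sum_le_sum fun s hs => by
          have hs := (mem_filter.1 hs).2
          exact add_le_add (hsmall s hs) (hbig s hs)
    _ ≤ ∑ s, ∑ t ∈ univ.erase s, p t s := by
        have hcompl : ({t | 2 ≤ a t} : Finset (Fin 5)) = ({t | a t ≤ 1} : Finset (Fin 5))ᶜ := by
          ext t
          simp
          omega
        rw [hcompl]
        exact sum_sum_erase_add_sum_compl_le (fun t s => pairCount_comm ..) _

theorem two_mul_pairCount_zero_slice_le (hC : AgreementLE 2 C)
    (hj : 3 ≤ #{s | deficiency (slice C j s) = 0}) {k : Fin 8} (hk : k ≠ j) (t : Fin 5) :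
    2 * pairCount 0 (slice C k t) (slice C k t) ≤ deficiency (slice C k t) ^ 2 := by
  obtain ⟨i, rfl⟩ := Fin.exists_succAbove_eq hk.symm
  obtain ⟨l, hl⟩ := Fin.exists_succAbove_eq hk
  refine two_mul_pairCount_zero_le (agreementLE_slice hC k t) (i := i)
    (T := {s | deficiency (slice C (k.succAbove i) s) ≠ 0}) ?_ fun s hs => ?_
  · have := card_filter_add_card_filter_not (s := univ)
      fun s => deficiency (slice C (k.succAbove i) s) = 0
    simp only [ne_eq]
    rw [card_univ, Fintype.card_fin] at this
    omega
  · have hs : deficiency (slice C (k.succAbove i) s) = 0 := by simpa using hs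
    have hfiber := (isKirkman_of_deficiency_eq_zero (agreementLE_slice hC _ s) hs).card_fiber l t
    rw [card_fiber_slice, hl] at hfiber
    rw [fiberDeficiency, card_fiber_slice, sub_eq_zero]
    simp only [and_comm (a := _ = t)]
    exact_mod_cast hfiber.symm

theorem card_ne_sixty_six (hC : AgreementLE 2 C) : #C ≠ 66 := fun hcard => by
  set E := fun j => ∑ s, pairCount 0 (slice C j s) (slice C j s) with hE
  have hcross (j) : ∑ s, crossBound (fun t => deficiency (slice C j t)) s + E j ≤ ∑ k, E k := by
    rw [hE, sum_pairCount_slice, pairCount_one_self C j, add_comm]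
    exact Nat.add_le_add_left (sum_crossBound_le hC hcard j) _
  have hbound (k s) := pairCount_zero_le_pairBound (agreementLE_slice hC k s)
  by_cases hj : ∃ j, 3 ≤ #{s | deficiency (slice C j s) = 0}
  · obtain ⟨j, hj⟩ := hj
    have hle (k) (hk : k ∈ univ.erase j) : E k ≤ 20 :=
      (sum_le_sum fun s _ => le_min (hbound k s) (by
        have := two_mul_pairCount_zero_slice_le hC hj (ne_of_mem_erase hk) s
        omega)).trans (sum_min_pairBound_le (sum_deficiency hC hcard k))
    have hothers : ∑ k ∈ univ.erase j, E k ≤ 140 := by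
      simpa using sum_le_card_nsmul _ _ _ hle
    have hmany := le_sum_crossBound (sum_deficiency hC hcard j) hj
    have := hcross j
    rw [← add_sum_erase _ _ (mem_univ j)] at this
    omega
  · push Not at hj
    have hlt (j) : 8 * E j < ∑ k, E k := by
      have hcross := hcross j
      have hE : E j ≤ _ := sum_le_sum fun s _ => hbound j s
      have := (seven_mul_sum_pairBound_lt_or (sum_deficiency hC hcard j)).resolve_right
        (hj j).not_ge
      omega
    have := sum_lt_sum_of_nonempty univ_nonempty fun j _ => hlt j
    simp [← mul_sum] at this

end Counting

section Shortening

variable {α : Type*} [DecidableEq α]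

theorem agreementLE_of_le_hammingDist {ι : Type*} [Fintype ι] {C : Finset (ι → α)} {d e : ℕ}
    (hde : Fintype.card ι ≤ d + e) (hC : ∀ u ∈ C, ∀ v ∈ C, u ≠ v → e ≤ hammingDist u v) :
    AgreementLE d C := fun u hu v hv huv => by
  have := hC u hu v hv huv
  have := agreement_add_hammingDist u v
  omega

theorem card_le_card_mul_of_slice [Fintype α] {n d N : ℕ}
    (hN : ∀ D : Finset (Fin n → α), AgreementLE d D → #D ≤ N) (C : Finset (Fin (n + 1) → α))
    (hC : AgreementLE (d + 1) C) : #C ≤ Fintype.card α * N := by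
  rw [← sum_card_slice C 0]
  exact sum_le_card_nsmul _ _ _ fun s _ => hN _ (agreementLE_slice hC 0 s)

theorem card_le_sixty_five (C : Finset (Word 8)) (hC : AgreementLE 2 C) : #C ≤ 65 := by
  by_contra! h
  obtain ⟨D, hDC, hD⟩ := exists_subset_card_eq h
  exact card_ne_sixty_six (hC.mono hDC) hD

end Shortening

end AgreementCode

open AgreementCode

/-- `A_5(9,6) ≤ 325`, `A_5(10,6) ≤ 1625` and `A_5(11,6) ≤ 8125`. -/
theorem A5_9_10_11_d6_bounds :
    (∀ C : Finset (Fin 9 → Fin 5),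
      (∀ u ∈ C, ∀ v ∈ C, u ≠ v → 6 ≤ hammingDist u v) → C.card ≤ 325)
    ∧ (∀ C : Finset (Fin 10 → Fin 5),
      (∀ u ∈ C, ∀ v ∈ C, u ≠ v → 6 ≤ hammingDist u v) → C.card ≤ 1625)
    ∧ (∀ C : Finset (Fin 11 → Fin 5),
      (∀ u ∈ C, ∀ v ∈ C, u ≠ v → 6 ≤ hammingDist u v) → C.card ≤ 8125) := by
  have h9 := card_le_card_mul_of_slice card_le_sixty_five
  have h10 := card_le_card_mul_of_slice h9
  have h11 := card_le_card_mul_of_slice h10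
  exact ⟨fun C hC => h9 C (agreementLE_of_le_hammingDist (by simp) hC),
    fun C hC => h10 C (agreementLE_of_le_hammingDist (by simp) hC),
    fun C hC => h11 C (agreementLE_of_le_hammingDist (by simp) hC)⟩
end
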